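/- arXiv:1101.1856 — 2 statements merged into one kernel-verified Lean document; each statement's English description precedes it below -/
import Mathlib

section
/- Let X be a one-dimensional Peano continuum and let Y ⊆ X be a subcontinuum containing the union of all essential reduced loops of X (the core). Then for each x ∈ X \ Y there is a unique point r(x) ∈ Y such that every arc in X from x to any point of Y passes through r(x). -/
open Set

/-- Covering dimension at most `n`. -/
def CovDimLE (X : Type*) [TopologicalSpace X] (n : ℕ) : Prop :=
  ∀ U : Set (Set X), U.Finite → (∀ u ∈ U, IsOpen u) → ⋃₀ U = Set.univ →
    ∃ V : Set (Set X), V.Finite ∧ (∀ v ∈ V, IsOpen v) ∧ ⋃₀ V = Set.univ ∧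
      (∀ v ∈ V, ∃ u ∈ U, v ⊆ u) ∧ ∀ x : X, {v ∈ V | x ∈ v}.ncard ≤ n + 1

/-- A path is reduced if it is constant or admits no nullhomotopic subloop. -/
def IsReducedPath {X : Type*} [TopologicalSpace X] {a b : X} (α : Path a b) : Prop :=
  (∀ t, α t = a) ∨
    ¬ ∃ (s t : ℝ) (hst : s < t) (_ : 0 ≤ s) (_ : t ≤ 1) (h : α.extend s = α.extend t),
      Path.Homotopic
        ((α.truncate s t).cast (by rw [min_eq_left hst.le]; exact h.symm) rfl)
        (Path.refl (α.extend t))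

/-- The union of the images of all essential reduced loops. -/
def HomotopyCore (X : Type*) [TopologicalSpace X] : Set X :=
  ⋃ (x : X) (γ : Path x x) (_ : ¬ γ.Homotopic (Path.refl x) ∧ IsReducedPath γ),
    Set.range fun t => γ t


open Topology unitInterval

/-- Perturbing finitely many complex numbers into pairwise independent position. -/
theorem aux_generic {ι : Type*} [Finite ι] (z : ι → ℂ) {ε : ℝ} (hε : 0 < ε) :
    ∃ c : ι → ℂ, (∀ i, ‖c i - z i‖ < ε) ∧ (∀ i, c i ≠ 0) ∧
      ∀ i j, i ≠ j → (c i).re * (c j).im - (c i).im * (c j).re ≠ 0 := by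
  classical
  have := Fintype.ofFinite ι
  obtain ⟨k, hk⟩ : ∃ k : ι → ℕ, Function.Injective k :=
    ⟨fun i => (Fintype.equivFin ι i : ℕ), fun i j h => by
      exact (Fintype.equivFin ι).injective (Fin.ext h)⟩
  let d : ι → ℂ := fun i => ⟨1, k i⟩
  let P : ι → ι → Polynomial ℝ := fun i j =>
    (Polynomial.C (z i).re + Polynomial.X) * (Polynomial.C (z j).im + Polynomial.C (k j : ℝ) * Polynomial.X)
     - (Polynomial.C (z i).im + Polynomial.C (k i : ℝ) * Polynomial.X) * (Polynomial.C (z j).re + Polynomial.X)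
  have hP : ∀ i j, i ≠ j → P i j ≠ 0 := by
    intro i j hij h0
    have hc := fun t : ℝ => congrArg (Polynomial.eval t) h0
    simp only [P, Polynomial.eval_sub, Polynomial.eval_mul, Polynomial.eval_add, Polynomial.eval_C,
      Polynomial.eval_X, Polynomial.eval_zero] at hc
    have h1 := hc 1
    have h2 := hc (-1)
    have h3 := hc 0
    have : (k j : ℝ) = k i := by linarith
    exact hij (hk (by exact_mod_cast this.symm))
  let Q : ι → Polynomial ℝ := fun i => Polynomial.C (z i).re + Polynomial.X
  have hQ : ∀ i, Q i ≠ 0 := by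
    intro i h0
    have hc := fun t : ℝ => congrArg (Polynomial.eval t) h0
    simp only [Q, Polynomial.eval_add, Polynomial.eval_C, Polynomial.eval_X,
      Polynomial.eval_zero] at hc
    linarith [hc 0, hc 1]
  obtain ⟨M, hM0, hM⟩ : ∃ M : ℝ, 0 < M ∧ ∀ i, ‖d i‖ < M := by
    refine ⟨∑ i, ‖d i‖ + 1, by positivity, fun i => ?_⟩
    have := Finset.single_le_sum (f := fun i => ‖d i‖) (fun i _ => norm_nonneg _) (Finset.mem_univ i)
    linarith
  have hfin : ((⋃ i, ((Q i).rootSet ℝ)) ∪ ⋃ p : {p : ι × ι // p.1 ≠ p.2}, ((P p.1.1 p.1.2).rootSet ℝ)).Finite := by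
    refine Set.Finite.union (Set.finite_iUnion fun i => ?_) (Set.finite_iUnion fun i => ?_) <;>
      exact Polynomial.rootSet_finite _ _
  obtain ⟨τ, hτ, hτ'⟩ := ((Set.Ioo_infinite (show (0:ℝ) < ε / M by positivity)).sdiff hfin).nonempty
  simp only [Set.mem_union, Set.mem_iUnion, not_or, not_exists] at hτ'
  refine ⟨fun i => z i + τ * d i, fun i => ?_, fun i h => ?_, fun i j hij h => ?_⟩
  · have : z i + τ * d i - z i = (τ : ℂ) * d i := by ring
    rw [this, norm_mul, Complex.norm_real, Real.norm_of_nonneg hτ.1.le]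
    calc τ * ‖d i‖ ≤ τ * M := by gcongr; exacts [hτ.1.le, (hM i).le]
      _ < ε / M * M := by gcongr; exact hτ.2
      _ = ε := by field_simp
  · apply hτ'.1 i
    rw [Polynomial.mem_rootSet]
    refine ⟨hQ i, ?_⟩
    have := congrArg Complex.re h
    simpa [Q, d] using this
  · apply hτ'.2 ⟨(i, j), hij⟩
    rw [Polynomial.mem_rootSet]
    refine ⟨hP i j hij, ?_⟩
    simp [d] at h
    simp [P]
    linarith

/-- In covering dimension at most one, complex functions can be approximated by
nowhere vanishing ones. -/
theorem aux_approx {X : Type*} [MetricSpace X] [CompactSpace X] (hdim : CovDimLE X 1)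
    (f : C(X, ℂ)) {ε : ℝ} (hε : 0 < ε) :
    ∃ g : C(X, ℂ), (∀ x, g x ≠ 0) ∧ ∀ x, ‖g x - f x‖ < ε := by
  classical
  obtain ⟨T, hT⟩ := isCompact_univ.elim_finite_subcover
    (fun z : ℂ => f ⁻¹' Metric.ball z (ε / 4)) (fun z => Metric.isOpen_ball.preimage f.continuous)
    (fun x _ => Set.mem_iUnion.2 ⟨f x, by simp; positivity⟩)
  obtain ⟨V, hVfin, hVo, hVc, hVU, hVn⟩ := hdim ((fun z : ℂ => f ⁻¹' Metric.ball z (ε / 4)) '' T)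
    (T.finite_toSet.image _)
    (by rintro _ ⟨z, -, rfl⟩; exact Metric.isOpen_ball.preimage f.continuous)
    (by
      rw [Set.sUnion_image]
      exact Set.eq_univ_of_univ_subset hT)
  have : Finite V := hVfin
  have := Fintype.ofFinite V
  have hz : ∀ v : V, ∃ z : ℂ, ∀ x ∈ (v : Set X), ‖z - f x‖ < ε / 4 := by
    intro v
    obtain ⟨u, ⟨z, -, rfl⟩, hu⟩ := hVU v v.2
    refine ⟨z, fun x hx => ?_⟩
    have := hu hx
    simpa [dist_eq_norm, norm_sub_rev] using this
  choose z hz using hz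
  obtain ⟨c, hcz, hc0, hcc⟩ := aux_generic z (show 0 < ε / 4 by positivity)
  obtain ⟨ρ, hρ⟩ := PartitionOfUnity.exists_isSubordinate (isClosed_univ (X := X))
    (fun v : V => (v : Set X)) (fun v => hVo v v.2)
    (by rw [← Set.sUnion_eq_iUnion, hVc])
  have hsum : ∀ x, ∑ v, ρ v x = 1 := fun x => by
    rw [← finsum_eq_sum_of_fintype]; exact ρ.sum_eq_one (Set.mem_univ x)
  have hsupp : ∀ v x, ρ v x ≠ 0 → x ∈ (v : Set X) := fun v x h =>
    hρ v (subset_tsupport _ h)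
  refine ⟨⟨fun x => ∑ v, (ρ v x : ℂ) * c v, by fun_prop⟩, fun x h0 => ?_, fun x => ?_⟩
  · simp only [ContinuousMap.coe_mk] at h0
    obtain ⟨v, hv⟩ : ∃ v, ρ v x ≠ 0 := by
      by_contra! h
      have := hsum x
      simp [h] at this
    have hcases : ∃ w, w ≠ v ∧ ∀ u, u ≠ v → u ≠ w → ρ u x = 0 ∨ ∀ u, u ≠ v → ρ u x = 0 := by
      by_cases h : ∃ w, w ≠ v ∧ ρ w x ≠ 0
      · obtain ⟨w, hwv, hw⟩ := h
        refine ⟨w, hwv, fun u huv huw => Or.inl ?_⟩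
        by_contra hu
        have h3 : ({(u : Set X), (v : Set X), (w : Set X)} : Set (Set X)).ncard = 3 := by
          rw [Set.ncard_eq_three]
          exact ⟨u, v, w, fun h => huv (Subtype.ext h), fun h => huw (Subtype.ext h),
            fun h => hwv (Subtype.ext h.symm), rfl⟩
        have h4 : ({(u : Set X), (v : Set X), (w : Set X)} : Set (Set X)) ⊆ {v ∈ V | x ∈ v} := by
          rintro _ (rfl | rfl | rfl)
          exacts [⟨u.2, hsupp u x hu⟩, ⟨v.2, hsupp v x hv⟩, ⟨w.2, hsupp w x hw⟩]
        have := Set.ncard_le_ncard h4 (hVfin.subset (Set.sep_subset _ _))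
        have := hVn x
        omega
      · push Not at h
        exfalso
        have : ∑ u, (ρ u x : ℂ) * c u = ρ v x * c v := by
          refine Finset.sum_eq_single v (fun u _ hu => by simp [h u hu]) (by simp)
        rw [this] at h0
        have : (ρ v x : ℂ) ≠ 0 := by exact_mod_cast hv
        exact (mul_ne_zero this (hc0 v)) h0
    obtain ⟨w, hwv, hw⟩ := hcases
    have : ∑ u, (ρ u x : ℂ) * c u = ρ v x * c v + ρ w x * c w := by
      rw [← Finset.sum_subset (Finset.subset_univ {v, w}), Finset.sum_pair hwv.symm]
      intro u _ hu
      simp only [Finset.mem_insert, Finset.mem_singleton, not_or] at hu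
      rcases hw u hu.1 hu.2 with h | h
      · simp [h]
      · simp [h u hu.1]
    rw [this] at h0
    have hre := congrArg Complex.re h0
    have him := congrArg Complex.im h0
    simp at hre him
    apply hcc v w hwv.symm
    have : ρ v x * ((c v).re * (c w).im - (c v).im * (c w).re) = 0 := by
      linear_combination (c w).im * hre - (c w).re * him
    exact (mul_eq_zero.1 this).resolve_left hv
  · have h1 : (∑ v, (ρ v x : ℂ) * c v) - f x = ∑ v, (ρ v x : ℂ) * (c v - f x) := by
      simp only [mul_sub, Finset.sum_sub_distrib, ← Finset.sum_mul]
      have : ∑ v, (ρ v x : ℂ) = 1 := by exact_mod_cast hsum x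
      rw [this, one_mul]
    simp only [ContinuousMap.coe_mk]
    rw [h1]
    calc ‖∑ v, (ρ v x : ℂ) * (c v - f x)‖ ≤ ∑ v, ‖(ρ v x : ℂ) * (c v - f x)‖ := norm_sum_le _ _
      _ ≤ ∑ v, ρ v x * (ε / 2) := by
        refine Finset.sum_le_sum fun v _ => ?_
        rw [norm_mul, Complex.norm_real, Real.norm_of_nonneg (ρ.nonneg v x)]
        by_cases h : ρ v x = 0
        · simp [h]
        · refine mul_le_mul_of_nonneg_left ?_ (ρ.nonneg v x)
          have h2 := hz v x (hsupp v x h)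
          have h3 := hcz v
          have h4 : c v - f x = (c v - z v) + (z v - f x) := by ring
          rw [h4]
          exact (norm_add_le _ _).trans (by linarith)
      _ = ε / 2 := by rw [← Finset.sum_mul, hsum, one_mul]
      _ < ε := by linarith

/-- A simple closed curve in a one-dimensional compact metric space is essential. -/
theorem aux_essential {X : Type*} [MetricSpace X] [CompactSpace X] (hdim : CovDimLE X 1)
    {a : X} (γ : Path a a) (hγ : ∀ s t : I, s < t → γ s = γ t → s = 0 ∧ t = 1) :
    ¬ γ.Homotopic (Path.refl a) := by
  intro hh
  let e : C(I, ℂ) := ⟨fun t => Complex.exp (2 * Real.pi * t * Complex.I), by fun_prop⟩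
  have he : ∀ s t : I, γ s = γ t → e s = e t := by
    have key : ∀ s t : I, s < t → γ s = γ t → e s = e t := by
      intro s t hst h
      obtain ⟨rfl, rfl⟩ := hγ s t hst h
      simp [e, Complex.exp_two_pi_mul_I]
    intro s t h
    rcases lt_trichotomy s t with h' | h' | h'
    · exact key s t h' h
    · rw [h']
    · exact (key t s h' h.symm).symm
  let rf : C(I, Set.range γ) := ⟨Set.rangeFactorization γ, by fun_prop⟩
  have hq : IsQuotientMap rf := by
    refine IsClosedMap.isQuotientMap ?_ rf.continuous Set.rangeFactorization_surjective
    exact rf.continuous.isClosedMap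
  obtain ⟨f₀, hf₀⟩ : ∃ f₀ : C(Set.range γ, ℂ), ∀ t, f₀ (rf t) = e t := by
    have hfac : Function.FactorsThrough e rf := fun s t h => he s t (congrArg Subtype.val h)
    exact ⟨hq.lift e hfac, fun t => DFunLike.congr_fun (hq.lift_comp e hfac) t⟩
  obtain ⟨f, hf⟩ := f₀.exists_restrict_eq (isCompact_range γ.continuous).isClosed
  have hf' : ∀ t, f (γ t) = e t := fun t => by
    rw [← hf₀, ← hf]; rfl
  obtain ⟨g, hg0, hg⟩ := aux_approx hdim f (one_pos)
  have hslit : ∀ t : I, g (γ t) * Complex.exp (-(2 * Real.pi * t * Complex.I)) ∈ Complex.slitPlane := by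
    intro t
    have key : ‖g (γ t) * Complex.exp (-(2 * Real.pi * t * Complex.I)) - 1‖ < 1 → g (γ t) * Complex.exp (-(2 * Real.pi * t * Complex.I)) ∈ Complex.slitPlane := fun h => by
      simpa using Complex.mem_slitPlane_of_norm_lt_one h
    apply key
    have h1 : g (γ t) * Complex.exp (-(2 * Real.pi * t * Complex.I)) - 1
      = (g (γ t) - f (γ t)) * Complex.exp (-(2 * Real.pi * t * Complex.I)) := by
      rw [hf', sub_mul]
      simp only [e, ContinuousMap.coe_mk, ← Complex.exp_add]
      simp
    rw [h1, norm_mul, Complex.norm_exp]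
    simpa using hg (γ t)
  let p : ℂ → {z : ℂ // z ≠ 0} := fun z => ⟨_, z.exp_ne_zero⟩
  have cov : IsCoveringMap p := Complex.isCoveringMap_exp
  let G : C(X, {z : ℂ // z ≠ 0}) := ⟨fun x => ⟨g x, hg0 x⟩, by fun_prop⟩
  have hrel : (G.comp γ.toContinuousMap).HomotopicRel
      (ContinuousMap.const I (G a)) {0, 1} := by
    have := ContinuousMap.HomotopicRel.comp_continuousMap hh G
    exact this
  let Γ : C(I, ℂ) := ⟨fun t => 2 * Real.pi * t * Complex.I +
      Complex.log (g (γ t) * Complex.exp (-(2 * Real.pi * t * Complex.I))), by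
    refine Continuous.add (by fun_prop) (Continuous.clog (by fun_prop) hslit)⟩
  have hΓ : p ∘ Γ = G.comp γ.toContinuousMap := by
    funext t
    apply Subtype.ext
    change Complex.exp (Γ t) = g (γ t)
    simp only [Γ, ContinuousMap.coe_mk]
    rw [Complex.exp_add, Complex.exp_log (Complex.slitPlane_ne_zero (hslit t)), mul_left_comm,
      ← Complex.exp_add]
    simp
  have h0 : (G.comp γ.toContinuousMap) 0 = p (Γ 0) := (congrFun hΓ 0).symm
  have h0' : (ContinuousMap.const I (G a)) 0 = p (Γ 0) := by
    rw [← h0]; change G a = G (γ 0); rw [γ.source]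
  have h1 := cov.liftPath_apply_one_eq_of_homotopicRel hrel (Γ 0) h0 h0'
  rw [← (cov.eq_liftPath_iff' (γ := G.comp γ.toContinuousMap) (γ_0 := h0)).2 ⟨hΓ, rfl⟩, cov.liftPath_const (x := G a) h0'] at h1
  simp only [Γ, ContinuousMap.coe_mk, ContinuousMap.const_apply] at h1
  simp [Complex.exp_neg, Complex.exp_two_pi_mul_I] at h1


/-- Minimal closed parameter sets for a path. -/
theorem aux_minimal {X : Type*} [TopologicalSpace X] [T2Space X] (f : ℝ → X) (hf : Continuous f) :
    ∃ K : Set ℝ, IsClosed K ∧ K ⊆ Icc 0 1 ∧ (0 : ℝ) ∈ K ∧ (1 : ℝ) ∈ K ∧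
      (∀ s ∈ K, ∀ t ∈ K, s < t → (∀ r ∈ K, r ≤ s ∨ t ≤ r) → f s = f t) ∧
      (∀ s ∈ K, ∀ t ∈ K, s < t → f s = f t → ∀ r ∈ K, r ≤ s ∨ t ≤ r) := by
  let S : Set (Set ℝ) := {K | IsClosed K ∧ K ⊆ Icc 0 1 ∧ (0 : ℝ) ∈ K ∧ (1 : ℝ) ∈ K ∧
      (∀ s ∈ K, ∀ t ∈ K, s < t → (∀ r ∈ K, r ≤ s ∨ t ≤ r) → f s = f t)}
  obtain ⟨K, hK⟩ : ∃ K, Minimal (· ∈ S) K := by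
    apply zorn_superset
    intro c hcS hc
    rcases c.eq_empty_or_nonempty with rfl | hne
    · refine ⟨Icc 0 1, ⟨isClosed_Icc, subset_rfl, by simp, by simp, ?_⟩, by simp⟩
      intro s hs t ht hst h
      have := h ((s + t) / 2) ⟨by linarith [hs.1, ht.1], by linarith [hs.2, ht.2]⟩
      rcases this with h | h <;> linarith
    · have : Nonempty c := hne.to_subtype
      refine ⟨⋂₀ c, ⟨isClosed_sInter fun K hK => (hcS hK).1, ?_, fun K hK => (hcS hK).2.2.1,
        fun K hK => (hcS hK).2.2.2.1, ?_⟩, fun K hK => sInter_subset_of_mem hK⟩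
      · obtain ⟨K, hK⟩ := hne
        exact (sInter_subset_of_mem hK).trans (hcS hK).2.1
      intro s hs t ht hst hgap
      by_contra hne'
      obtain ⟨O1, O2, hO1, hO2, hs1, ht2, hd⟩ := t2_separation hne'
      obtain ⟨δ1, hδ1, h1⟩ := Metric.isOpen_iff.1 (hO1.preimage hf) s hs1
      obtain ⟨δ2, hδ2, h2⟩ := Metric.isOpen_iff.1 (hO2.preimage hf) t ht2
      obtain ⟨η, hη0, hη1, hη2, hη3⟩ : ∃ η : ℝ, 0 < η ∧ η < δ1 ∧ η < δ2 ∧ η < (t - s) / 2 := by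
        refine ⟨min (min δ1 δ2) ((t - s) / 2) / 2, ?_, ?_, ?_, ?_⟩
        · have : 0 < (t - s) / 2 := by linarith
          positivity
        all_goals
          have h3 : 0 < min (min δ1 δ2) ((t - s) / 2) := by
            have : 0 < (t - s) / 2 := by linarith
            positivity
          have h4 := min_le_left (min δ1 δ2) ((t - s) / 2)
          have h5 := min_le_right (min δ1 δ2) ((t - s) / 2)
          have h6 := min_le_left δ1 δ2
          have h7 := min_le_right δ1 δ2
          linarith
      obtain ⟨⟨K, hKc⟩, hK⟩ := (isCompact_Icc (a := s + η) (b := t - η)).elim_directed_family_closed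
        (fun K : c => (K : Set ℝ)) (fun K => (hcS K.2).1)
        (by
          rw [← sInter_eq_iInter]
          ext r
          simp only [mem_inter_iff, mem_empty_iff_false, iff_false, not_and]
          rintro ⟨hr1, hr2⟩ hr
          rcases hgap r hr with h | h <;> linarith)
        (by
          intro A B
          rcases hc.total A.2 B.2 with h | h
          · exact ⟨A, subset_rfl, h⟩
          · exact ⟨B, h, subset_rfl⟩)
      simp only at hK
      have hKS := hcS hKc
      have hKcomp : IsCompact K := isCompact_Icc.of_isClosed_subset hKS.1 hKS.2.1
      have hsK : s ∈ K := hs K hKc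
      have htK : t ∈ K := ht K hKc
      obtain ⟨a, ha, ha'⟩ := (hKcomp.inter_right (isClosed_Iic (a := s + η))).exists_isGreatest
        ⟨s, hsK, by simp [hη0.le]⟩
      obtain ⟨b, hb, hb'⟩ := (hKcomp.inter_right (isClosed_Ici (a := t - η))).exists_isLeast
        ⟨t, htK, by simp [hη0.le]⟩
      have hsa : s ≤ a := ha' ⟨hsK, by simp [hη0.le]⟩
      have hbt : b ≤ t := hb' ⟨htK, by simp [hη0.le]⟩
      have ha2 : a ≤ s + η := ha.2
      have hb2 : t - η ≤ b := hb.2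
      have heq : f a = f b := by
        refine hKS.2.2.2.2 a ha.1 b hb.1 (by linarith) fun r hr => ?_
        by_cases h3 : r ≤ s + η
        · exact Or.inl (ha' ⟨hr, h3⟩)
        by_cases h4 : t - η ≤ r
        · exact Or.inr (hb' ⟨hr, h4⟩)
        exfalso
        have : r ∈ Icc (s + η) (t - η) ∩ K := ⟨⟨by linarith, by linarith⟩, hr⟩
        rw [hK] at this
        exact this
      have e1 : f a ∈ O1 := h1 (by rw [Metric.mem_ball, Real.dist_eq, abs_lt]; constructor <;> linarith)
      have e2 : f b ∈ O2 := h2 (by rw [Metric.mem_ball, Real.dist_eq, abs_lt]; constructor <;> linarith)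
      exact (Set.disjoint_left.1 hd e1) (heq ▸ e2)
  obtain ⟨⟨hKcl, hKI, hK0, hK1, hKgap⟩, hmin⟩ := hK
  refine ⟨K, hKcl, hKI, hK0, hK1, hKgap, ?_⟩
  intro s hs t ht hst heq r hr
  have hs0 := (hKI hs)
  have ht0 := (hKI ht)
  by_contra! hcon
  have hin : K ∩ (Ioo s t)ᶜ ∈ S := by
    refine ⟨hKcl.inter isOpen_Ioo.isClosed_compl, inter_subset_left.trans hKI, ⟨hK0, ?_⟩,
      ⟨hK1, ?_⟩, ?_⟩
    · rintro ⟨h, -⟩; linarith [hs0.1]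
    · rintro ⟨-, h⟩; linarith [ht0.2]
    rintro a ⟨haK, ha⟩ b ⟨hbK, hb⟩ hab hgap
    have hsg := hgap s ⟨hs, by simp⟩
    have htg := hgap t ⟨ht, by simp⟩
    by_cases hc : a = s ∧ b = t
    · rw [hc.1, hc.2, heq]
    apply hKgap a haK b hbK hab
    intro r hr
    by_cases hrst : r ∈ Ioo s t
    · simp only [mem_Ioo, mem_compl_iff, not_and, not_lt] at hrst ha hb
      rcases hsg with h | h
      · rcases htg with h' | h'
        · left; linarith
        · exfalso
          apply hc
          constructor
          · by_contra hne
            have : s < a := lt_of_le_of_ne h (Ne.symm hne)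
            linarith [ha this]
          · by_contra hne
            have : b < t := lt_of_le_of_ne h' hne
            have : s < b := by linarith
            linarith [hb this]
      · right; linarith
    · exact hgap r ⟨hr, hrst⟩
  have := hmin hin inter_subset_left hr
  exact this.2 hcon

/-- From a path, produce a path with connected fibres. -/
theorem aux_monotone {X : Type*} [MetricSpace X] (f : ℝ → X) (hf : Continuous f) :
    ∃ h : ℝ → X, ContinuousOn h (Icc 0 1) ∧ h 0 = f 0 ∧ h 1 = f 1 ∧ h '' Icc 0 1 ⊆ f '' Icc 0 1 ∧
      ∀ s ∈ Icc (0:ℝ) 1, ∀ t ∈ Icc (0:ℝ) 1, s ≤ t → h s = h t → ∀ r ∈ Icc s t, h r = h s := by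
  obtain ⟨K, hKcl, hKI, hK0, hK1, hKgap, hmin⟩ := aux_minimal f hf
  have hKc : IsCompact K := isCompact_Icc.of_isClosed_subset hKcl hKI
  have hex : ∀ t : ℝ, ∃ sg : ℝ, 0 ≤ t → IsGreatest (K ∩ Iic t) sg := by
    intro t
    by_cases ht : 0 ≤ t
    · obtain ⟨sg, hsg⟩ := (hKc.inter_right (isClosed_Iic (a := t))).exists_isGreatest ⟨0, hK0, ht⟩
      exact ⟨sg, fun _ => hsg⟩
    · exact ⟨0, fun h => absurd h ht⟩
  choose sg hsg using hex
  have hsgK : ∀ t, 0 ≤ t → sg t ∈ K := fun t ht => (hsg t ht).1.1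
  have hsgle : ∀ t, 0 ≤ t → sg t ≤ t := fun t ht => (hsg t ht).1.2
  have hsgub : ∀ t, 0 ≤ t → ∀ k ∈ K, k ≤ t → k ≤ sg t := fun t ht k hk hkt => (hsg t ht).2 ⟨hk, hkt⟩
  have hsgfix : ∀ t ∈ K, sg t = t := fun t ht =>
    le_antisymm (hsgle t (hKI ht).1) (hsgub t (hKI ht).1 t ht le_rfl)
  have hsgmono : ∀ s t, 0 ≤ s → s ≤ t → sg s ≤ sg t := fun s t hs hst =>
    hsgub t (hs.trans hst) _ (hsgK s hs) ((hsgle s hs).trans hst)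
  refine ⟨fun t => f (sg t), ?_, by simp [hsgfix 0 hK0], by simp [hsgfix 1 hK1], ?_, ?_⟩
  · have hu : UniformContinuousOn f (Icc 0 1) :=
      isCompact_Icc.uniformContinuousOn_of_continuous hf.continuousOn
    have key : ∀ ε > 0, ∃ δ > 0, ∀ s ∈ Icc (0:ℝ) 1, ∀ t ∈ Icc (0:ℝ) 1, s ≤ t → t - s < δ →
        dist (f (sg s)) (f (sg t)) < ε := by
      intro ε hε
      obtain ⟨δ, hδ, H⟩ := Metric.uniformContinuousOn_iff.1 hu ε hε
      refine ⟨δ, hδ, fun s hs t ht hst hlt => ?_⟩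
      by_cases hss : sg s = sg t
      · simp [hss, hε]
      have hlt' : sg s < sg t := lt_of_le_of_ne (hsgmono s t hs.1 hst) hss
      have hst' : s < sg t := by
        by_contra! hcon
        exact absurd (hsgub s hs.1 _ (hsgK t ht.1) hcon) (not_le.2 hlt')
      obtain ⟨k, hk, hk'⟩ := (hKc.inter_right (isClosed_Ici (a := s))).exists_isLeast
        ⟨sg t, hsgK t ht.1, hst'.le⟩
      have hkt : k ≤ sg t := hk' ⟨hsgK t ht.1, hst'.le⟩
      have hsk : s ≤ k := hk.2
      have heq : f (sg s) = f k := by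
        rcases (hsgle s hs.1).trans hsk |>.eq_or_lt with h | h
        · rw [h]
        · refine hKgap _ (hsgK s hs.1) k hk.1 h fun r hr => ?_
          rcases le_total r s with h' | h'
          · exact Or.inl (hsgub s hs.1 r hr h')
          · exact Or.inr (hk' ⟨hr, h'⟩)
      rw [heq]
      apply H k (hKI hk.1) _ (hKI (hsgK t ht.1))
      rw [Real.dist_eq, abs_lt]
      have := hsgle t ht.1
      constructor <;> linarith
    rw [Metric.continuousOn_iff]
    intro b hb ε hε
    obtain ⟨δ, hδ, H⟩ := key ε hε
    refine ⟨δ, hδ, fun a ha hab => ?_⟩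
    rw [Real.dist_eq, abs_lt] at hab
    rcases le_total a b with h | h
    · exact H a ha b hb h (by linarith)
    · rw [dist_comm]; exact H b hb a ha h (by linarith)
  · rintro _ ⟨t, ht, rfl⟩
    exact ⟨sg t, hKI (hsgK t ht.1), rfl⟩
  · intro s hs t ht hst heq r hr
    simp only at heq ⊢
    have hr0 : 0 ≤ r := hs.1.trans hr.1
    have h1 := hsgmono s r hs.1 hr.1
    have h2 := hsgmono r t hr0 hr.2
    rcases (h1.trans h2).eq_or_lt with h | h
    · have : sg r = sg s := by linarith
      rw [this]
    · rcases hmin _ (hsgK s hs.1) _ (hsgK t ht.1) h heq (sg r) (hsgK r hr0) with h' | h'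
      · rw [le_antisymm h' h1]
      · have hlast := le_antisymm h2 h'
        rw [hlast, heq]

/-- Path connected implies arc connected, for compact metric spaces. -/
theorem aux_arc {X : Type*} [MetricSpace X] [CompactSpace X] {a b : X} (hab : a ≠ b)
    (f : Path a b) : ∃ g : Path a b, Function.Injective g ∧ range g ⊆ range f := by
  obtain ⟨h, hcont, h0, h1, him, hfib⟩ := aux_monotone f.extend f.continuous_extend
  rw [Path.extend_zero] at h0
  rw [Path.extend_one] at h1
  have : Nonempty X := ⟨a⟩
  let q : ℕ → X := TopologicalSpace.denseSeq X
  have hq : DenseRange q := TopologicalSpace.denseRange_denseSeq X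
  obtain ⟨D, hD⟩ : ∃ D : ℝ, ∀ x y : X, dist x y ≤ D :=
    ⟨Metric.diam (univ : Set X), fun x y =>
      Metric.dist_le_diam_of_mem isCompact_univ.isBounded (mem_univ _) (mem_univ _)⟩
  let A : ℝ → Set X := fun t => h '' Icc 0 t
  have hAne : ∀ t, 0 ≤ t → (A t).Nonempty := fun t ht => ⟨h 0, 0, ⟨le_rfl, ht⟩, rfl⟩
  have hAmono : ∀ s t, s ≤ t → A s ⊆ A t := fun s t hst => image_mono (Icc_subset_Icc_right hst)
  have hbd : ∀ n t, 0 ≤ t → ‖(1/2:ℝ)^n * Metric.infDist (q n) (A t)‖ ≤ (1/2)^n * D := by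
    intro n t ht
    rw [norm_mul, Real.norm_of_nonneg Metric.infDist_nonneg, Real.norm_of_nonneg (by positivity)]
    gcongr
    obtain ⟨y, hy⟩ := hAne t ht
    exact (Metric.infDist_le_dist_of_mem hy).trans (hD _ _)
  have hsD : Summable fun n : ℕ => (1/2:ℝ)^n * D := summable_geometric_two.mul_right D
  have hsum : ∀ t, 0 ≤ t → Summable fun n : ℕ => (1/2:ℝ)^n * Metric.infDist (q n) (A t) :=
    fun t ht => Summable.of_norm_bounded hsD fun n => hbd n t ht
  let φ : ℝ → ℝ := fun t => ∑' n, (1/2:ℝ)^n * Metric.infDist (q n) (A t)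
  have hanti : ∀ s t, 0 ≤ s → s ≤ t → ∀ n,
      (1/2:ℝ)^n * Metric.infDist (q n) (A t) ≤ (1/2:ℝ)^n * Metric.infDist (q n) (A s) := by
    intro s t hs hst n
    gcongr
    exact Metric.infDist_le_infDist_of_subset (hAmono s t hst) (hAne s hs)
  have hφanti : ∀ s t, 0 ≤ s → s ≤ t → φ t ≤ φ s := fun s t hs hst =>
    (hsum t (hs.trans hst)).tsum_le_tsum (hanti s t hs hst) (hsum s hs)
  have hu : UniformContinuousOn h (Icc 0 1) := isCompact_Icc.uniformContinuousOn_of_continuous hcont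
  have hφc : ContinuousOn φ (Icc 0 1) := by
    refine continuousOn_tsum (fun n => ContinuousOn.mul continuousOn_const ?_) hsD
      (fun n t ht => hbd n t ht.1)
    have key : ∀ ε > 0, ∃ δ > 0, ∀ s ∈ Icc (0:ℝ) 1, ∀ t ∈ Icc (0:ℝ) 1, s ≤ t → t - s < δ →
        Metric.infDist (q n) (A s) ≤ Metric.infDist (q n) (A t) + ε := by
      intro ε hε
      obtain ⟨δ, hδ, H⟩ := Metric.uniformContinuousOn_iff.1 hu ε hε
      refine ⟨δ, hδ, fun s hs t ht hst hlt => ?_⟩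
      rw [← sub_le_iff_le_add, Metric.le_infDist (hAne t ht.1)]
      rintro _ ⟨r, hr, rfl⟩
      rw [sub_le_iff_le_add]
      rcases le_total r s with h' | h'
      · have : h r ∈ A s := ⟨r, ⟨hr.1, h'⟩, rfl⟩
        linarith [Metric.infDist_le_dist_of_mem (x := q n) this]
      · have : h s ∈ A s := ⟨s, ⟨hs.1, le_rfl⟩, rfl⟩
        have h2 := H r ⟨hr.1, hr.2.trans ht.2⟩ s hs (by
          rw [Real.dist_eq, abs_lt]; constructor <;> linarith [hr.2])
        linarith [Metric.infDist_le_dist_of_mem (x := q n) this, dist_triangle (q n) (h r) (h s)]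
    rw [Metric.continuousOn_iff]
    intro b hb ε hε
    obtain ⟨δ, hδ, H⟩ := key (ε / 2) (by positivity)
    refine ⟨δ, hδ, fun a ha hab => ?_⟩
    rw [Real.dist_eq, abs_lt] at hab ⊢
    rcases le_total a b with h | h
    · have h3 := H a ha b hb h (by linarith)
      have h4 := Metric.infDist_le_infDist_of_subset (x := q n) (hAmono a b h) (hAne a ha.1)
      constructor <;> linarith
    · have h3 := H b hb a ha h (by linarith)
      have h4 := Metric.infDist_le_infDist_of_subset (x := q n) (hAmono b a h) (hAne b hb.1)
      constructor <;> linarith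
  have hφh : ∀ s ∈ Icc (0:ℝ) 1, ∀ t ∈ Icc (0:ℝ) 1, s ≤ t → (φ s = φ t ↔ h s = h t) := by
    intro s hs t ht hst
    constructor
    · intro heq
      by_contra hne
      have hnot : h t ∉ A s := by
        rintro ⟨r, hr, hrt⟩
        have e1 := hfib r ⟨hr.1, hr.2.trans hs.2⟩ t ht (hr.2.trans hst) hrt s ⟨hr.2, hst⟩
        exact hne (e1.trans hrt)
      have hAcl : IsClosed (A s) := by
        refine (IsCompact.image_of_continuousOn isCompact_Icc ?_).isClosed
        exact hcont.mono (Icc_subset_Icc_right hs.2)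
      have hpos := (hAcl.notMem_iff_infDist_pos (hAne s hs.1)).1 hnot
      obtain ⟨n, hn⟩ := hq.exists_dist_lt (h t) (half_pos hpos)
      have hlt : Metric.infDist (q n) (A t) < Metric.infDist (q n) (A s) := by
        have e1 : Metric.infDist (q n) (A t) ≤ dist (q n) (h t) :=
          Metric.infDist_le_dist_of_mem ⟨t, ⟨ht.1, le_rfl⟩, rfl⟩
        have e2 := Metric.infDist_le_infDist_add_dist (s := A s) (x := h t) (y := q n)
        rw [dist_comm] at e1
        linarith
      have : φ t < φ s := by
        refine Summable.tsum_lt_tsum (i := n) (hanti s t hs.1 hst) ?_ (hsum t ht.1) (hsum s hs.1)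
        gcongr
      linarith
    · intro heq
      have : A s = A t := by
        refine (hAmono s t hst).antisymm ?_
        rintro _ ⟨r, hr, rfl⟩
        rcases le_total r s with h' | h'
        · exact ⟨r, ⟨hr.1, h'⟩, rfl⟩
        · exact ⟨s, ⟨hs.1, le_rfl⟩, (hfib s hs t ht hst heq r ⟨h', hr.2⟩).symm⟩
      simp only [φ, this]
  have hφh' : ∀ s t : I, φ s = φ t ↔ h s = h t := by
    intro s t
    rcases le_total (s:ℝ) t with h' | h'
    · exact hφh s s.2 t t.2 h'
    · rw [eq_comm, hφh t t.2 s s.2 h', eq_comm]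
  have hlt : φ 1 < φ 0 := by
    refine lt_of_le_of_ne (hφanti 0 1 le_rfl zero_le_one) fun heq => ?_
    have := (hφh 0 (by simp) 1 (by simp) zero_le_one).1 heq.symm
    rw [h0, h1] at this
    exact hab this
  have hpos : 0 < φ 0 - φ 1 := by linarith
  have hφcI : Continuous fun t : I => φ t := continuousOn_iff_continuous_domRestrict.1 hφc
  have hhcI : Continuous fun t : I => h t := continuousOn_iff_continuous_domRestrict.1 hcont
  let ψ : C(I, I) := ⟨fun t => ⟨(φ 0 - φ t) / (φ 0 - φ 1), by
      have e1 := hφanti 0 t le_rfl t.2.1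
      exact div_nonneg (by linarith) hpos.le, by
      have e1 := hφanti t 1 t.2.1 t.2.2
      rw [div_le_one hpos]; linarith⟩,
      Continuous.subtype_mk ((continuous_const.sub hφcI).div_const _) _⟩
  have hψ : ∀ s t : I, ψ s = ψ t ↔ h s = h t := by
    intro s t
    rw [← hφh' s t]
    rw [Subtype.ext_iff]
    change (φ 0 - φ s) / (φ 0 - φ 1) = (φ 0 - φ t) / (φ 0 - φ 1) ↔ _
    rw [div_left_inj' hpos.ne']
    simp
  have hψ0 : ψ 0 = 0 := by
    apply Subtype.ext; simp [ψ]
  have hψ1 : ψ 1 = 1 := by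
    apply Subtype.ext; simp [ψ, div_self hpos.ne']
  have hsurj : Function.Surjective ψ := by
    intro y
    have := intermediate_value_univ (0 : I) 1 ψ.continuous
    rw [hψ0, hψ1] at this
    exact this ⟨y.2.1, y.2.2⟩
  have hquot : IsQuotientMap ψ := ψ.continuous.isClosedMap.isQuotientMap ψ.continuous hsurj
  let hI : C(I, X) := ⟨fun t => h t, hhcI⟩
  have hfac : Function.FactorsThrough hI ψ := fun s t hst => (hψ s t).1 hst
  let g : C(I, X) := hquot.lift hI hfac
  have hg : ∀ t, g (ψ t) = h t := fun t => DFunLike.congr_fun (hquot.lift_comp hI hfac) t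
  refine ⟨⟨g, ?_, ?_⟩, ?_, ?_⟩
  · change g 0 = a
    rw [← hψ0, hg]; simpa using h0
  · change g 1 = b
    rw [← hψ1, hg]; simpa using h1
  · intro u v huv
    obtain ⟨s, rfl⟩ := hsurj u
    obtain ⟨t, rfl⟩ := hsurj v
    change g (ψ s) = g (ψ t) at huv
    rw [hg, hg] at huv
    exact (hψ s t).2 huv
  · rintro _ ⟨u, rfl⟩
    obtain ⟨s, rfl⟩ := hsurj u
    change g (ψ s) ∈ _
    rw [hg]
    obtain ⟨r, hr, hr'⟩ := him ⟨s, s.2, rfl⟩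
    rw [← hr', Path.extend_apply _ hr]
    exact mem_range_self _


/-- Small connected chains between points of a connected open set. -/
theorem aux_chain {X : Type*} [MetricSpace X] [LocallyConnectedSpace X] {U : Set X}
    (hU : IsOpen U) (hUc : IsPreconnected U) {ε : ℝ} (hε : 0 < ε) {a b : X}
    (ha : a ∈ U) (hb : b ∈ U) :
    ∃ (n : ℕ) (z : ℕ → X) (W : ℕ → Set X), z 0 = a ∧ (∀ i, n ≤ i → z i = b) ∧ (a = b → n = 0) ∧
      ∀ i, IsOpen (W i) ∧ IsPreconnected (W i) ∧ W i ⊆ U ∧ (∀ x ∈ W i, ∀ y ∈ W i, dist x y ≤ ε) ∧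
        z i ∈ W i ∧ z (i + 1) ∈ W i := by
  have hsmall : ∀ x ∈ U, ∃ W : Set X, IsOpen W ∧ IsPreconnected W ∧ W ⊆ U ∧
      (∀ x ∈ W, ∀ y ∈ W, dist x y ≤ ε) ∧ x ∈ W := by
    intro x hx
    have hO : IsOpen (U ∩ Metric.ball x (ε / 2)) := hU.inter Metric.isOpen_ball
    have hxO : x ∈ U ∩ Metric.ball x (ε / 2) := ⟨hx, Metric.mem_ball_self (by positivity)⟩
    refine ⟨connectedComponentIn (U ∩ Metric.ball x (ε / 2)) x, hO.connectedComponentIn,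
      isPreconnected_connectedComponentIn,
      (connectedComponentIn_subset _ _).trans inter_subset_left, ?_, mem_connectedComponentIn hxO⟩
    intro y hy z hz
    have h1 := (connectedComponentIn_subset _ _ hy).2
    have h2 := (connectedComponentIn_subset _ _ hz).2
    rw [Metric.mem_ball] at h1 h2
    linarith [dist_triangle_right y z x]
  by_cases hab : a = b
  · subst hab
    obtain ⟨W, h1, h2, h3, h4, h5⟩ := hsmall a ha
    exact ⟨0, fun _ => a, fun _ => W, rfl, fun _ _ => rfl, fun _ => rfl,
      fun _ => ⟨h1, h2, h3, h4, h5, h5⟩⟩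
  let P : X → X → Prop := fun a b => ∃ (n : ℕ) (z : ℕ → X) (W : ℕ → Set X), z 0 = a ∧
      (∀ i, n ≤ i → z i = b) ∧
      ∀ i, IsOpen (W i) ∧ IsPreconnected (W i) ∧ W i ⊆ U ∧ (∀ x ∈ W i, ∀ y ∈ W i, dist x y ≤ ε) ∧
        z i ∈ W i ∧ z (i + 1) ∈ W i
  have hone : ∀ x y : X, ∀ W : Set X, IsOpen W → IsPreconnected W → W ⊆ U →
      (∀ x ∈ W, ∀ y ∈ W, dist x y ≤ ε) → x ∈ W → y ∈ W → P x y := by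
    intro x y W h1 h2 h3 h4 hx hy
    refine ⟨1, fun i => if i = 0 then x else y, fun _ => W, by simp, fun i hi => ?_, fun i => ?_⟩
    · simp [show i ≠ 0 by omega]
    · refine ⟨h1, h2, h3, h4, ?_, by simpa using hy⟩
      by_cases h : i = 0 <;> simp [h, hx, hy]
  have hP : P a b := by
    refine hUc.induction₂' P ?_ ?_ ha hb
    · intro x hx
      obtain ⟨W, h1, h2, h3, h4, h5⟩ := hsmall x hx
      filter_upwards [mem_nhdsWithin_of_mem_nhds (h1.mem_nhds h5)] with y hy
      exact ⟨hone x y W h1 h2 h3 h4 h5 hy, hone y x W h1 h2 h3 h4 hy h5⟩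
    · rintro x y w - - - ⟨n, z, W, hz0, hzn, hW⟩ ⟨n', z', W', hz0', hzn', hW'⟩
      refine ⟨n + n', fun i => if i < n then z i else z' (i - n),
        fun i => if i < n then W i else W' (i - n), ?_, ?_, ?_⟩
      · by_cases h : 0 < n
        · simp [h, hz0]
        · have : n = 0 := by omega
          subst this
          have := hzn 0 le_rfl
          simp [hz0', ← this, hz0]
      · intro i hi
        simp only [show ¬ i < n by omega, if_false]
        exact hzn' _ (by omega)
      · intro i
        by_cases h : i < n
        · simp only [h, if_true]
          refine ⟨(hW i).1, (hW i).2.1, (hW i).2.2.1, (hW i).2.2.2.1, (hW i).2.2.2.2.1, ?_⟩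
          by_cases h' : i + 1 < n
          · simp only [h', if_true]; exact (hW i).2.2.2.2.2
          · simp only [h', if_false]
            have e : i + 1 - n = 0 := by omega
            rw [e, hz0', ← hzn (i + 1) (by omega)]
            exact (hW i).2.2.2.2.2
        · simp only [h, if_false, show ¬ i + 1 < n by omega]
          rw [show i + 1 - n = (i - n) + 1 by omega]
          exact hW' (i - n)
  obtain ⟨n, z, W, h1, h2, h3⟩ := hP
  exact ⟨n, z, W, h1, h2, fun h => absurd h hab, h3⟩

/-- A stage of the construction of a path. -/
structure AuxStage (X : Type*) where
  N : ℕ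
  z : ℕ → X
  W : ℕ → Set X

/-- The stage joins `a` to `b` in `U` by sets of size at most `ε`. -/
def AuxStage.Good {X : Type*} [MetricSpace X] (S : AuxStage X) (U : Set X) (a b : X) (ε : ℝ) : Prop :=
  0 < S.N ∧ S.z 0 = a ∧ (∀ i, S.N ≤ i → S.z i = b) ∧
    ∀ i, IsOpen (S.W i) ∧ IsPreconnected (S.W i) ∧ S.W i ⊆ U ∧
      (∀ x ∈ S.W i, ∀ y ∈ S.W i, dist x y ≤ ε) ∧ S.z i ∈ S.W i ∧ S.z (i + 1) ∈ S.W i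

/-- The second stage refines the first. -/
def AuxStage.Refines {X : Type*} (S S' : AuxStage X) : Prop :=
  ∃ m : ℕ, 0 < m ∧ S'.N = S.N * m ∧ ∀ j, S'.W j ⊆ S.W (j / m)

theorem aux_refine {X : Type*} [MetricSpace X] [LocallyConnectedSpace X] {U : Set X} {a b : X}
    {ε ε' : ℝ} (hε' : 0 < ε') (S : AuxStage X) (hS : S.Good U a b ε) :
    ∃ S' : AuxStage X, S'.Good U a b ε' ∧ S.Refines S' := by
  obtain ⟨hN, h0, hb, hW⟩ := hS
  have := fun i => aux_chain (hW i).1 (hW i).2.1 hε' (hW i).2.2.2.2.1 (hW i).2.2.2.2.2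
  choose n z W hz0 hzn hne hWW using this
  let m := (Finset.range S.N).sup n + 1
  have hm : ∀ i, n i < m := by
    intro i
    by_cases hi : i < S.N
    · have := Finset.le_sup (f := n) (Finset.mem_range.2 hi)
      omega
    · rw [hne i (by rw [hb i (by omega), hb (i + 1) (by omega)])]
      omega
  have hm0 : 0 < m := by omega
  refine ⟨⟨S.N * m, fun j => z (j / m) (j % m), fun j => W (j / m) (j % m)⟩,
    ⟨Nat.mul_pos hN hm0, ?_, ?_, ?_⟩, m, hm0, rfl, fun j => (hWW _ _).2.2.1⟩
  · simp [hz0, h0]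
  · intro i hi
    simp only at hi ⊢
    have h1 : S.N ≤ i / m := (Nat.le_div_iff_mul_le hm0).2 hi
    have h2 : S.z (i / m) = S.z (i / m + 1) := by rw [hb _ h1, hb _ (by omega)]
    rw [hzn _ _ (by rw [hne _ h2]; omega), hb _ (by omega)]
  · intro j
    obtain ⟨w1, w2, w3, w4, w5, w6⟩ := hWW (j / m) (j % m)
    refine ⟨w1, w2, w3.trans (hW _).2.2.1, w4, w5, ?_⟩
    simp only
    have hjm := Nat.mod_lt j hm0
    by_cases hlt : j % m + 1 < m
    · have e1 : (j + 1) / m = j / m := by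
        rw [Nat.div_eq_iff hm0]
        have := Nat.div_add_mod' j m
        constructor
        · omega
        · omega
      have e2 : (j + 1) % m = j % m + 1 := by
        rw [Nat.add_mod, Nat.mod_eq_of_lt (a := 1) (by omega), Nat.mod_eq_of_lt hlt]
      rw [e1, e2]; exact w6
    · have e0 : j % m + 1 = m := by omega
      have e3 : j + 1 = (j / m + 1) * m := by
        have := Nat.div_add_mod' j m
        rw [add_mul, one_mul]; omega
      have e1 : (j + 1) / m = j / m + 1 := by rw [e3]; exact Nat.mul_div_cancel _ hm0
      have e2 : (j + 1) % m = 0 := by rw [e3]; exact Nat.mul_mod_left _ _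
      rw [e1, e2, hz0]
      rw [e0, hzn _ _ (hm _).le] at w6
      exact w6

/-- Points of a connected open set can be joined by a path in its closure. -/
theorem aux_path {X : Type*} [MetricSpace X] [CompactSpace X] [LocallyConnectedSpace X] {U : Set X}
    (hU : IsOpen U) (hUc : IsPreconnected U) {a b : X} (ha : a ∈ U) (hb : b ∈ U) :
    ∃ γ : Path a b, ∀ t, γ t ∈ closure U := by
  have hstart : ∃ S : AuxStage X, S.Good U a b ((1/2 : ℝ)^0) := by
    obtain ⟨n, z, W, h1, h2, -, h4⟩ := aux_chain hU hUc (show (0:ℝ) < (1/2)^0 by norm_num) ha hb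
    exact ⟨⟨n + 1, z, W⟩, Nat.succ_pos _, h1, fun i hi => h2 i (by simp at hi; omega), h4⟩
  have hstep : ∀ (k : ℕ) (S : {S : AuxStage X // S.Good U a b ((1/2 : ℝ)^k)}),
      ∃ S' : {S : AuxStage X // S.Good U a b ((1/2 : ℝ)^(k+1))}, S.1.Refines S'.1 := by
    intro k S
    obtain ⟨S', h1, h2⟩ := aux_refine (show (0:ℝ) < (1/2)^(k+1) by positivity) S.1 S.2
    exact ⟨⟨S', h1⟩, h2⟩
  choose next hnext using hstep
  obtain ⟨S0, hS0⟩ := hstart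
  let F : (k : ℕ) → {S : AuxStage X // S.Good U a b ((1/2 : ℝ)^k)} :=
    fun k => Nat.rec ⟨S0, hS0⟩ (fun k S => next k S) k
  have hF : ∀ k, (F k).1.Refines (F (k + 1)).1 := fun k => hnext k (F k)
  let u : ℝ → ℕ → X := fun t k => (F k).1.z ⌊t * (F k).1.N⌋₊
  have hu : ∀ t, 0 ≤ t → ∀ k, dist (u t k) (u t (k + 1)) ≤ 1 * (1/2:ℝ)^k := by
    intro t ht k
    obtain ⟨m, hm0, hN, hsub⟩ := hF k
    obtain ⟨-, -, -, hW⟩ := (F k).2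
    obtain ⟨-, -, -, hW'⟩ := (F (k+1)).2
    rw [one_mul]
    refine (hW ⌊t * (F k).1.N⌋₊).2.2.2.1 _ (hW _).2.2.2.2.1 _ ?_
    have h1 := hsub _ ((hW' ⌊t * (F (k+1)).1.N⌋₊).2.2.2.2.1)
    have h2 : ⌊t * (F (k+1)).1.N⌋₊ / m = ⌊t * (F k).1.N⌋₊ := by
      rw [← Nat.floor_div_natCast, hN]
      congr 1
      push_cast
      field_simp
    rw [h2] at h1
    exact h1
  have hlim : ∀ t : ℝ, ∃ x : X, 0 ≤ t → Filter.Tendsto (u t) Filter.atTop (𝓝 x) := by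
    intro t
    by_cases ht : 0 ≤ t
    · obtain ⟨x, hx⟩ := cauchySeq_tendsto_of_complete
        (cauchySeq_of_le_geometric (1/2) 1 (by norm_num) (hu t ht))
      exact ⟨x, fun _ => hx⟩
    · exact ⟨a, fun h => absurd h ht⟩
  choose f hf using hlim
  have hdist : ∀ t, 0 ≤ t → ∀ k, dist (u t k) (f t) ≤ 2 * (1/2:ℝ)^k := by
    intro t ht k
    have := dist_le_of_le_geometric_of_tendsto (1/2) 1 (by norm_num) (hu t ht) (hf t ht) k
    refine this.trans_eq ?_
    ring
  have hcont : ContinuousOn f (Icc 0 1) := by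
    have key : ∀ (k : ℕ) (s t : ℝ), 0 ≤ s → s ≤ t → t - s < 1 / ((F k).1.N : ℝ) → dist (f s) (f t) ≤ 5 * (1/2:ℝ)^k := by
      intro k s t hs hst hlt
      obtain ⟨hN, -, -, hW⟩ := (F k).2
      have hN' : (0:ℝ) < (F k).1.N := by exact_mod_cast hN
      have h1 : ⌊s * (F k).1.N⌋₊ ≤ ⌊t * (F k).1.N⌋₊ := Nat.floor_mono (by gcongr)
      have h2 : ⌊t * (F k).1.N⌋₊ ≤ ⌊s * (F k).1.N⌋₊ + 1 := by
        rw [← Nat.floor_add_one (by positivity)]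
        apply Nat.floor_mono
        rw [lt_div_iff₀ hN'] at hlt
        linarith
      have h3 : dist (u s k) (u t k) ≤ (1/2:ℝ)^k := by
        refine (hW ⌊s * (F k).1.N⌋₊).2.2.2.1 _ (hW _).2.2.2.2.1 _ ?_
        rcases h1.eq_or_lt with h | h
        · simp only [u, ← h]; exact (hW _).2.2.2.2.1
        · have : ⌊t * (F k).1.N⌋₊ = ⌊s * (F k).1.N⌋₊ + 1 := by omega
          simp only [u, this]; exact (hW _).2.2.2.2.2
      have h4 := hdist s hs k
      have h5 := hdist t (hs.trans hst) k
      rw [dist_comm] at h4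
      linarith [dist_triangle4 (f s) (u s k) (u t k) (f t)]
    rw [Metric.continuousOn_iff]
    intro t ht ε hε
    obtain ⟨k, hk⟩ := exists_pow_lt_of_lt_one (show 0 < ε / 5 by positivity) (show (1/2:ℝ) < 1 by norm_num)
    have hN := (F k).2.1
    refine ⟨1 / ((F k).1.N : ℝ), by positivity, fun s hs hst => ?_⟩
    rw [Real.dist_eq, abs_lt] at hst
    rcases le_total s t with h | h
    · linarith [key k s t hs.1 h (by linarith)]
    · rw [dist_comm]
      linarith [key k t s ht.1 h (by linarith)]
  have hf0 : f 0 = a := by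
    refine tendsto_nhds_unique (hf 0 le_rfl) ?_
    have : u 0 = fun _ => a := by
      funext k; simp only [u, zero_mul, Nat.floor_zero]; exact (F k).2.2.1
    rw [this]; exact tendsto_const_nhds
  have hf1 : f 1 = b := by
    refine tendsto_nhds_unique (hf 1 zero_le_one) ?_
    have : u 1 = fun _ => b := by
      funext k; simp only [u, one_mul, Nat.floor_natCast]; exact (F k).2.2.2.1 _ le_rfl
    rw [this]; exact tendsto_const_nhds
  have hfc : Continuous fun t : I => f t := continuousOn_iff_continuous_domRestrict.1 hcont
  refine ⟨⟨⟨fun t => f t, hfc⟩, by simpa using hf0, by simpa using hf1⟩, fun t => ?_⟩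
  refine mem_closure_of_tendsto (hf t t.2.1) (Filter.Eventually.of_forall fun k => ?_)
  have hW := (F k).2.2.2.2 ⌊(t:ℝ) * (F k).1.N⌋₊
  exact hW.2.2.1 hW.2.2.2.2.1

/-- Connected open subsets are path connected. -/
theorem aux_joined {X : Type*} [MetricSpace X] [CompactSpace X] [LocallyConnectedSpace X] {U : Set X}
    (hU : IsOpen U) (hUc : IsPreconnected U) {a b : X} (ha : a ∈ U) (hb : b ∈ U) :
    JoinedIn U a b := by
  refine hUc.induction₂ (JoinedIn U) ?_ (fun _ _ _ _ _ _ h h' => h.trans h')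
    (fun _ _ _ _ h => h.symm) ha hb
  intro x hx
  obtain ⟨ε, hε, hball⟩ := Metric.isOpen_iff.1 hU x hx
  have hxW : x ∈ Metric.ball x (ε / 2) := Metric.mem_ball_self (by positivity)
  have hWo : IsOpen (connectedComponentIn (Metric.ball x (ε / 2)) x) :=
    Metric.isOpen_ball.connectedComponentIn
  filter_upwards [mem_nhdsWithin_of_mem_nhds (hWo.mem_nhds (mem_connectedComponentIn hxW))] with y hy
  obtain ⟨γ, hγ⟩ := aux_path hWo isPreconnected_connectedComponentIn
    (mem_connectedComponentIn hxW) hy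
  refine ⟨γ, fun t => hball ?_⟩
  have h1 := closure_mono (connectedComponentIn_subset _ _) (hγ t)
  have h2 := Metric.closure_ball_subset_closedBall h1
  rw [Metric.mem_closedBall] at h2
  rw [Metric.mem_ball]
  linarith


/-- Simple closed curves lie in the core. -/
theorem aux_core {X : Type*} [MetricSpace X] [CompactSpace X] (hdim : CovDimLE X 1)
    {a : X} (γ : Path a a) (hγ : ∀ s t : I, s < t → γ s = γ t → s = 0 ∧ t = 1) (t : I) :
    γ t ∈ HomotopyCore X := by
  refine mem_iUnion.2 ⟨a, mem_iUnion.2 ⟨γ, mem_iUnion.2 ⟨⟨aux_essential hdim γ hγ, Or.inr ?_⟩,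
    ⟨t, rfl⟩⟩⟩⟩
  rintro ⟨s, t, hst, hs, ht, h, hh⟩
  have hs1 : s ∈ Icc (0:ℝ) 1 := ⟨hs, by linarith⟩
  have ht1 : t ∈ Icc (0:ℝ) 1 := ⟨by linarith, ht⟩
  have h' := h
  rw [Path.extend_apply _ hs1, Path.extend_apply _ ht1] at h'
  obtain ⟨e1, e2⟩ := hγ ⟨s, hs1⟩ ⟨t, ht1⟩ hst h'
  have e1 : s = 0 := congrArg Subtype.val e1
  have e2 : t = 1 := congrArg Subtype.val e2
  refine aux_essential hdim _ ?_ hh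
  intro u v huv heq
  have key : ∀ w : I, (γ.truncate s t) w = γ w := by
    intro w
    change γ.extend (min (max w s) t) = γ w
    rw [e1, e2, max_eq_left w.2.1, min_eq_left w.2.2, Path.extend_apply _ w.2]
  apply hγ u v huv
  rw [← key u, ← key v]
  exact heq

/-- Key lemma: two paths from `x` first hitting `Y` at their ends hit it at the same point. -/
theorem aux_key {X : Type*} [MetricSpace X] [CompactSpace X]
    [LocallyConnectedSpace X] (hdim : CovDimLE X 1)
    (Y : Set X) (hYconn : IsConnected Y)
    (hcore : HomotopyCore X ⊆ Y) {x p q : X} (α : Path x p) (β : Path x q)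
    (hp : p ∈ Y) (hq : q ∈ Y) (hα : ∀ t, α t ∈ Y → α t = p) (hβ : ∀ t, β t ∈ Y → β t = q) :
    p = q := by
  by_contra hpq
  obtain ⟨D, hDinj, hDr⟩ := aux_arc hpq (α.symm.trans β)
  have hDY : ∀ t, D t ∈ Y → t = 0 ∨ t = 1 := by
    intro t ht
    have h1 := hDr (mem_range_self t)
    rw [Path.trans_range, Path.symm_range] at h1
    rcases h1 with ⟨s, hs⟩ | ⟨s, hs⟩
    · left
      apply hDinj
      rw [D.source, ← hs]
      exact hα s (hs ▸ ht)
    · right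
      apply hDinj
      rw [D.target, ← hs]
      exact hβ s (hs ▸ ht)
  let c : I := ⟨1/2, by norm_num, by norm_num⟩
  have hc0 : (0 : I) < c := by rw [← Subtype.coe_lt_coe]; norm_num [c]
  have hc1 : c < (1 : I) := by rw [← Subtype.coe_lt_coe]; norm_num [c]
  have hcY : D c ∉ Y := fun h => by
    rcases hDY c h with h | h
    · exact hc0.ne' h
    · exact hc1.ne h
  have hYsub : Y ⊆ connectedComponentIn {D c}ᶜ p :=
    hYconn.isPreconnected.subset_connectedComponentIn hp
      (fun y hy h => hcY (by rw [mem_singleton_iff] at h; rwa [← h]))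
  have hN : IsOpen (connectedComponentIn {D c}ᶜ p) := isOpen_compl_singleton.connectedComponentIn
  obtain ⟨C', hC'⟩ := aux_joined hN isPreconnected_connectedComponentIn (hYsub hp) (hYsub hq)
  obtain ⟨C, hCinj, hCr⟩ := aux_arc hpq C'
  have hCc : D c ∉ range C := by
    intro h
    obtain ⟨t, ht⟩ := hCr h
    have := connectedComponentIn_subset _ _ (hC' t)
    rw [ht] at this
    exact this rfl
  have hTcl : IsClosed (D ⁻¹' range C) := (isCompact_range C.continuous).isClosed.preimage D.continuous
  obtain ⟨u, ⟨huC, huc⟩, hu⟩ := (hTcl.inter (isClosed_Iic (a := c))).isCompact.exists_isGreatest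
    ⟨0, ⟨⟨0, by simp⟩, hc0.le⟩⟩
  obtain ⟨v, ⟨hvC, hvc⟩, hv⟩ := (hTcl.inter (isClosed_Ici (a := c))).isCompact.exists_isLeast
    ⟨1, ⟨⟨1, by simp⟩, hc1.le⟩⟩
  obtain ⟨u', hu'⟩ := huC
  obtain ⟨v', hv'⟩ := hvC
  have huc' : u < c := lt_of_le_of_ne huc fun h => hCc ⟨u', by rw [hu', h]⟩
  have hvc' : c < v := lt_of_le_of_ne hvc fun h => hCc ⟨v', by rw [hv', h]⟩
  have huv : u < v := huc'.trans hvc'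
  have hmid : ∀ t, u < t → t < v → D t ∉ range C := by
    intro t hut htv hC
    rcases le_total t c with h | h
    · exact absurd (hu ⟨hC, h⟩) (not_le.2 hut)
    · exact absurd (hv ⟨hC, h⟩) (not_le.2 htv)
  have huv' : u' ≠ v' := by
    rintro rfl
    exact huv.ne (hDinj (hu'.symm.trans hv'))
  have huvR : (u : ℝ) < v := huv
  let δ : ℝ → X := fun t => if t ≤ 1/2 then D.extend (u + 2 * t * (v - u)) else
    C.extend (v' + (2 * t - 1) * (u' - v'))
  have hδc : Continuous δ := by
    refine Continuous.if_le ?_ ?_ continuous_id continuous_const ?_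
    · exact D.continuous_extend.comp (by fun_prop)
    · exact C.continuous_extend.comp (by fun_prop)
    · intro t ht
      have ht : t = 1/2 := ht
      subst ht
      have e1 : (u + 2 * (1/2) * (v - u) : ℝ) = v := by ring
      have e2 : (v' + (2 * (1/2) - 1) * (u' - v') : ℝ) = v' := by ring
      rw [e1, e2, Path.extend_apply _ v.2, Path.extend_apply _ v'.2]
      exact hv'.symm
  have hδ1 : ∀ t : ℝ, 0 ≤ t → t ≤ 1/2 → ∃ w : I, (w : ℝ) = u + 2 * t * (v - u) ∧ δ t = D w := by
    intro t h0 h1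
    have hmem : (u + 2 * t * (v - u) : ℝ) ∈ Icc (0:ℝ) 1 := by
      have := u.2.1
      have := v.2.2
      constructor <;> nlinarith
    exact ⟨⟨_, hmem⟩, rfl, by simp only [δ, h1, if_true]; exact Path.extend_apply _ hmem⟩
  have hδ2 : ∀ t : ℝ, 1/2 < t → t ≤ 1 → ∃ w : I, (w : ℝ) = v' + (2 * t - 1) * (u' - v') ∧ δ t = C w := by
    intro t h0 h1
    have hmem : (v' + (2 * t - 1) * (u' - v') : ℝ) ∈ Icc (0:ℝ) 1 := by
      have h1 := u'.2.1
      have h2 := v'.2.1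
      have h3 := u'.2.2
      have h4 := v'.2.2
      constructor <;> nlinarith
    exact ⟨⟨_, hmem⟩, rfl, by simp only [δ, not_le.2 h0, if_false]; exact Path.extend_apply _ hmem⟩
  have hδ0 : δ 0 = D u := by
    obtain ⟨w, hw, hw'⟩ := hδ1 0 le_rfl (by norm_num)
    rw [hw']; congr 1; apply Subtype.ext; rw [hw]; ring
  have hδe : δ 1 = D u := by
    obtain ⟨w, hw, hw'⟩ := hδ2 1 (by norm_num) le_rfl
    rw [hw', ← hu']; congr 1; apply Subtype.ext; rw [hw]; ring
  let γ : Path (D u) (D u) := ⟨⟨fun t : I => δ t, hδc.comp continuous_subtype_val⟩,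
    by simpa using hδ0, by simpa using hδe⟩
  have hγ : ∀ s t : I, s < t → γ s = γ t → s = 0 ∧ t = 1 := by
    intro s t hst heq
    have hst' : (s : ℝ) < t := hst
    change δ s = δ t at heq
    by_cases ht : (t : ℝ) ≤ 1/2
    · exfalso
      obtain ⟨w, hw, hw'⟩ := hδ1 s s.2.1 (by linarith)
      obtain ⟨z, hz, hz'⟩ := hδ1 t t.2.1 ht
      rw [hw', hz'] at heq
      have := hDinj heq
      rw [this, hz] at hw
      nlinarith
    push Not at ht
    obtain ⟨z, hz, hz'⟩ := hδ2 t ht t.2.2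
    by_cases hs : (s : ℝ) ≤ 1/2
    · obtain ⟨w, hw, hw'⟩ := hδ1 s s.2.1 hs
      rw [hw', hz'] at heq
      have hwu : w = u ∨ w = v := by
        by_contra! hcon
        apply hmid w _ _ ⟨z, heq.symm⟩
        · refine lt_of_le_of_ne ?_ hcon.1.symm
          rw [← Subtype.coe_le_coe, hw]
          nlinarith [s.2.1]
        · refine lt_of_le_of_ne ?_ hcon.2
          rw [← Subtype.coe_le_coe, hw]
          nlinarith [s.2.1]
      rcases hwu with rfl | rfl
      · rw [← hu'] at heq
        have := hCinj heq
        subst this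
        have hne : ((u' : ℝ) - v') ≠ 0 := fun h => huv' (Subtype.ext (by linarith))
        have e1 : ((2 * t - 2 : ℝ)) * (u' - v') = 0 := by linarith
        have e2 : ((t : ℝ)) = 1 := by
          have := (mul_eq_zero.1 e1).resolve_right hne
          linarith
        have e3 : (s : ℝ) * (v - w) = 0 := by linarith
        have e4 : (s : ℝ) = 0 := (mul_eq_zero.1 e3).resolve_right (by linarith)
        exact ⟨Subtype.ext e4, Subtype.ext e2⟩
      · exfalso
        rw [← hv'] at heq
        have := hCinj heq
        subst this
        have hne : ((u' : ℝ) - v') ≠ 0 := fun h => huv' (Subtype.ext (by linarith))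
        have e1 : ((2 * t - 1 : ℝ)) * (u' - v') = 0 := by linarith
        have := (mul_eq_zero.1 e1).resolve_right hne
        linarith
    · exfalso
      push Not at hs
      obtain ⟨w, hw, hw'⟩ := hδ2 s hs s.2.2
      rw [hw', hz'] at heq
      have := hCinj heq
      subst this
      have hne : ((u' : ℝ) - v') ≠ 0 := fun h => huv' (Subtype.ext (by linarith))
      have e1 : ((t - s : ℝ)) * (u' - v') = 0 := by linarith
      have := (mul_eq_zero.1 e1).resolve_right hne
      linarith
  have hvu : (0:ℝ) < v - u := by linarith
  have hcu : (u : ℝ) < c := huc'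
  have hcv : (c : ℝ) < v := hvc'
  have htmem : ((c - u) / (2 * (v - u)) : ℝ) ∈ Icc (0:ℝ) 1 := by
    constructor
    · exact div_nonneg (by linarith) (by linarith)
    · rw [div_le_one (by linarith)]; linarith
  have hthalf : ((c - u) / (2 * (v - u)) : ℝ) ≤ 1/2 := by
    have e : (1/2:ℝ) * (2 * (v - u)) = v - u := by ring
    rw [div_le_iff₀ (by linarith), e]
    exact sub_le_sub_right hcv.le _
  have hmem := hcore (aux_core hdim γ hγ ⟨_, htmem⟩)
  change δ ((c - u) / (2 * (v - u)) : ℝ) ∈ Y at hmem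
  obtain ⟨w, hw, hw'⟩ := hδ1 _ htmem.1 hthalf
  rw [hw'] at hmem
  have : w = c := by
    apply Subtype.ext
    rw [hw]; field_simp; ring
  rw [this] at hmem
  exact hcY hmem

/-- Truncating an arc at its first hitting point of a closed set. -/
theorem aux_first {X : Type*} [MetricSpace X] (Y : Set X) (hY : IsClosed Y) {x y : X}
    (hx : x ∉ Y) (hy : y ∈ Y) (γ : Path x y) (hγ : Function.Injective γ) :
    ∃ (p : X) (α : Path x p), p ∈ Y ∧ Function.Injective α ∧ range α ⊆ range γ ∧
      ∀ t, α t ∈ Y → α t = p := by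
  obtain ⟨t0, ht0, hmin⟩ := (hY.preimage γ.continuous).isCompact.exists_isLeast ⟨1, by simpa using hy⟩
  have ht0' : t0 ≠ 0 := by
    rintro rfl
    apply hx
    simpa using ht0
  have hpos : (0:ℝ) < t0 := lt_of_le_of_ne t0.2.1 fun h => ht0' (Subtype.ext h.symm)
  refine ⟨γ t0, ⟨⟨fun t => γ (t * t0), by fun_prop⟩, by simp, by simp⟩, ht0, ?_, ?_, ?_⟩
  · intro s t hst
    have := hγ hst
    have h2 : (s : ℝ) * t0 = t * t0 := congrArg Subtype.val this
    exact Subtype.ext (mul_right_cancel₀ hpos.ne' h2)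
  · rintro _ ⟨t, rfl⟩
    exact ⟨t * t0, rfl⟩
  · intro t ht
    change γ (t * t0) ∈ Y at ht
    change γ (t * t0) = γ t0
    have h1 := hmin ht
    have h2 : t * t0 ≤ t0 := by
      rw [← Subtype.coe_le_coe]
      exact mul_le_of_le_one_left t0.2.1 t.2.2
    rw [le_antisymm h2 h1]


/-- First point lemma: unique point of `Y` through which every arc from `x` to `Y` passes. -/
theorem stmt_7 {X : Type} [MetricSpace X] [CompactSpace X] [ConnectedSpace X]
    [LocallyConnectedSpace X] (hdim : CovDimLE X 1)
    (Y : Set X) (hYcpt : IsCompact Y) (hYconn : IsConnected Y)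
    (hcore : HomotopyCore X ⊆ Y) (x : X) (hx : x ∉ Y) :
    ∃! p : X, p ∈ Y ∧ ∀ y : X, y ∈ Y → ∀ γ : Path x y,
      Function.Injective (fun t => γ t) → p ∈ Set.range fun t => γ t := by
  obtain ⟨y₀, hy₀⟩ := hYconn.nonempty
  have hYcl := hYcpt.isClosed
  obtain ⟨γ', -⟩ := aux_joined isOpen_univ isPreconnected_univ (mem_univ x) (mem_univ y₀)
  have hne : x ≠ y₀ := by
    rintro rfl
    exact hx hy₀
  obtain ⟨γ₀, hγ₀, -⟩ := aux_arc hne γ'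
  obtain ⟨p, α, hp, hαinj, -, hα⟩ := aux_first Y hYcl hx hy₀ γ₀ hγ₀
  refine ⟨p, ⟨hp, fun y hy γ hγ => ?_⟩, ?_⟩
  · obtain ⟨q, β, hq, -, hβr, hβ⟩ := aux_first Y hYcl hx hy γ hγ
    have := aux_key hdim Y hYconn hcore α β hp hq hα hβ
    rw [this]
    exact hβr ⟨1, β.target⟩
  · rintro p' ⟨hp', h⟩
    obtain ⟨t, ht⟩ := h p hp α hαinj
    have ht : α t = p' := ht
    rw [← ht]
    exact hα t (ht ▸ hp')
end

section
/- Let X be a one-dimensional Peano continuum and Y a subcontinuum containing the core of X. The first point map r : X → Y (defined as r(x) = x for x ∈ Y, and for x ∉ Y as the unique point of Y through which every arc from x to Y passes) is a continuous retraction of X onto Y. -/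
open Set

theorem fp_path_of_chains {X : Type} [MetricSpace X] [CompleteSpace X]
    (ε : ℝ) (hε : 0 < ε) (R : ℕ → X → X → Prop) (N : ℕ → ℕ) (hN : ∀ n, 0 < N n)
    (hrefl : ∀ n x, R n x x)
    (hdist : ∀ n x y, R n x y → dist x y ≤ ε / 2 / 2 ^ n)
    (hchain : ∀ n x y, R n x y → ∃ c : ℕ → X, c 0 = x ∧ c (N n) = y ∧
      (∀ i < N n, R (n+1) (c i) (c (i+1))) ∧ ∀ i, dist x (c i) ≤ ε / 2 / 2 ^ n)
    (x y : X) (hxy : R 0 x y) :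
    ∃ f : ℝ → X, Continuous f ∧ f 0 = x ∧ f 1 = y ∧ ∀ t ∈ Icc (0:ℝ) 1, dist x (f t) ≤ 2 * ε := by
  classical
  choose! c hc0 hcN hcR hcd using hchain
  let M : ℕ → ℕ := fun n => ∏ i ∈ Finset.range n, N i
  have hM0 : M 0 = 1 := by simp [M]
  have hMs : ∀ n, M (n+1) = M n * N n := fun n => by simp [M, Finset.prod_range_succ]
  have hMpos : ∀ n, 0 < M n := fun n => Finset.prod_pos fun i _ => hN i
  let γ : ℕ → ℕ → X := fun n => Nat.rec (fun i => if i = 0 then x else y)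
    (fun n g i => c n (g (i / N n)) (g (i / N n + 1)) (i % N n)) n
  have hγ0 : ∀ i, γ 0 i = if i = 0 then x else y := fun i => rfl
  have hγs : ∀ n i, γ (n+1) i = c n (γ n (i / N n)) (γ n (i / N n + 1)) (i % N n) :=
    fun n i => rfl
  have hR : ∀ n i, R n (γ n i) (γ n (i+1)) := by
    intro n
    induction n with
    | zero =>
      intro i
      rw [hγ0, hγ0]
      by_cases h : i = 0
      · simpa [h] using hxy
      · simpa [h] using hrefl 0 y
    | succ n ih =>
      intro i
      have hlt : i % N n < N n := Nat.mod_lt _ (hN n)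
      have key : γ (n+1) (i+1) = c n (γ n (i / N n)) (γ n (i / N n + 1)) (i % N n + 1) := by
        by_cases h : i % N n + 1 = N n
        · have e : i + 1 = N n * (i / N n + 1) := by
            have := Nat.div_add_mod i (N n)
            rw [mul_add, mul_one]; omega
          have e1 : (i+1) / N n = i / N n + 1 := by
            rw [e, Nat.mul_div_cancel_left _ (hN n)]
          have e2 : (i+1) % N n = 0 := by rw [e, Nat.mul_mod_right]
          rw [hγs, e1, e2, h, hc0 _ _ _ (ih _), hcN _ _ _ (ih _)]
        · have e : i + 1 = (i % N n + 1) + N n * (i / N n) := by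
            have := Nat.div_add_mod i (N n)
            omega
          have hl : i % N n + 1 < N n := by omega
          have e1 : (i+1) / N n = i / N n := by
            rw [e, Nat.add_mul_div_left _ _ (hN n), Nat.div_eq_of_lt hl, zero_add]
          have e2 : (i+1) % N n = i % N n + 1 := by
            rw [e, Nat.add_mul_mod_self_left, Nat.mod_eq_of_lt hl]
          rw [hγs, e1, e2]
      rw [key, hγs]
      exact hcR _ _ _ (ih _) _ hlt
  let F : ℕ → ℝ → X := fun n t => γ n ⌊(M n : ℝ) * t⌋₊
  have hF : ∀ t n, dist (F n t) (F (n+1) t) ≤ ε / 2 / 2 ^ n := by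
    intro t n
    have : ⌊(M (n+1) : ℝ) * t⌋₊ / N n = ⌊(M n : ℝ) * t⌋₊ := by
      rw [← Nat.floor_div_natCast, hMs]
      congr 1
      have : (N n : ℝ) ≠ 0 := by exact_mod_cast (hN n).ne'
      push_cast; field_simp
    show dist (γ n _) (γ (n+1) _) ≤ _
    rw [hγs, this]
    exact hcd _ _ _ (hR _ _) _
  have hlim : ∀ t, ∃ l, Filter.Tendsto (fun n => F n t) Filter.atTop (nhds l) := fun t =>
    cauchySeq_tendsto_of_complete (cauchySeq_of_le_geometric_two (hF t))
  choose f hf using hlim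
  have hd : ∀ t n, dist (F n t) (f t) ≤ ε / 2 ^ n := fun t n =>
    dist_le_of_le_geometric_two_of_tendsto (hF t) (hf t) n
  have hfl : ∀ n s t, s ≤ t → t - s ≤ 1 / (M n : ℝ) → dist (F n s) (F n t) ≤ ε / 2 / 2 ^ n := by
    intro n s t hst h
    have hMp : (0:ℝ) < M n := by exact_mod_cast hMpos n
    have h1 : ⌊(M n : ℝ) * s⌋₊ ≤ ⌊(M n : ℝ) * t⌋₊ := Nat.floor_mono (by gcongr)
    have h2 : ⌊(M n : ℝ) * t⌋₊ ≤ ⌊(M n : ℝ) * s⌋₊ + 1 := by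
      have hle : (M n : ℝ) * t ≤ M n * s + 1 := by
        have : (M n : ℝ) * (t - s) ≤ M n * (1 / M n) := by gcongr
        rw [mul_one_div_cancel hMp.ne'] at this
        linarith
      by_cases h0 : 0 ≤ (M n : ℝ) * s
      · rw [← Nat.floor_add_one h0]
        exact Nat.floor_mono hle
      · have : ⌊(M n : ℝ) * t⌋₊ ≤ ⌊(1:ℝ)⌋₊ := Nat.floor_mono (by linarith)
        rw [Nat.floor_one] at this
        omega
    have hp : 0 ≤ ε / 2 / 2 ^ n := by positivity
    rcases Nat.lt_or_ge ⌊(M n : ℝ) * s⌋₊ ⌊(M n : ℝ) * t⌋₊ with h3 | h3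
    · have : ⌊(M n : ℝ) * t⌋₊ = ⌊(M n : ℝ) * s⌋₊ + 1 := by omega
      show dist (γ n _) (γ n _) ≤ _
      rw [this]
      exact hdist _ _ _ (hR _ _)
    · have : ⌊(M n : ℝ) * t⌋₊ = ⌊(M n : ℝ) * s⌋₊ := by omega
      show dist (γ n _) (γ n _) ≤ _
      rw [this, dist_self]; exact hp
  have hcl : ∀ n s t, s ≤ t → t - s ≤ 1 / (M n : ℝ) → dist (f s) (f t) ≤ 3 * (ε / 2 ^ n) := by
    intro n s t hst h
    have h1 := hfl n s t hst h
    have h2 := hd s n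
    have h3 := hd t n
    have h4 := dist_triangle4 (f s) (F n s) (F n t) (f t)
    rw [dist_comm (f s) (F n s)] at h4
    have : ε / 2 / 2 ^ n ≤ ε / 2 ^ n := by gcongr; linarith
    linarith
  have hcont : Continuous f := by
    rw [Metric.continuous_iff]
    intro t e he
    obtain ⟨n, hn⟩ : ∃ n : ℕ, (1/2:ℝ) ^ n < e / (3 * ε) :=
      exists_pow_lt_of_lt_one (by positivity) (by norm_num)
    have hn' : 3 * (ε / 2 ^ n) < e := by
      rw [lt_div_iff₀ (by positivity)] at hn
      rw [one_div, inv_pow] at hn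
      calc 3 * (ε / 2 ^ n) = (2 ^ n)⁻¹ * (3 * ε) := by field_simp
        _ < e := hn
    have hMp : (0:ℝ) < M n := by exact_mod_cast hMpos n
    refine ⟨1 / M n, by positivity, fun s hs => ?_⟩
    rw [Real.dist_eq, abs_lt] at hs
    rcases le_total s t with h | h
    · exact (hcl n s t h (by linarith)).trans_lt hn'
    · rw [dist_comm]; exact (hcl n t s h (by linarith)).trans_lt hn'
  have hγz : ∀ n, γ n 0 = x := by
    intro n
    induction n with
    | zero => simp [hγ0]
    | succ n ih =>
      rw [hγs, Nat.zero_div, Nat.zero_mod, hc0 _ _ _ (hR _ _), ih]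
  have hγe : ∀ n, γ n (M n) = y := by
    intro n
    induction n with
    | zero => simp [hγ0, hM0]
    | succ n ih =>
      rw [hγs, hMs, Nat.mul_div_cancel _ (hN n), Nat.mul_mod_left, hc0 _ _ _ (hR _ _), ih]
  have hF0 : ∀ n, F n 0 = x := fun n => by simp [F, hγz]
  have hF1 : ∀ n, F n 1 = y := fun n => by simp [F, hγe]
  refine ⟨f, hcont, ?_, ?_, ?_⟩
  · refine tendsto_nhds_unique (hf 0) ?_
    simp only [hF0]; exact tendsto_const_nhds
  · refine tendsto_nhds_unique (hf 1) ?_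
    simp only [hF1]; exact tendsto_const_nhds
  · intro t ht
    have h1 := hfl 0 0 t ht.1 (by simpa [hM0] using ht.2)
    have h2 := hd t 0
    have h3 := dist_triangle x (F 0 t) (f t)
    rw [hF0] at h1
    simp only [pow_zero, div_one] at h1 h2
    linarith

theorem fp_chain {X : Type} [TopologicalSpace X] (C : Set X) (hC : IsPreconnected C)
    (U : Set (Set X)) (hUf : U.Finite) (hUo : ∀ u ∈ U, IsOpen u) (hU : ⋃₀ U = Set.univ)
    (x y : X) (hx : x ∈ C) (hy : y ∈ C) :
    ∃ c : ℕ → X, c 0 = x ∧ c (U.ncard + 1) = y ∧ (∀ i, c i ∈ C) ∧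
      ∀ i, ∃ u ∈ U, c i ∈ u ∧ c (i+1) ∈ u := by
  classical
  have : Fintype U := hUf.fintype
  let G : SimpleGraph U := SimpleGraph.fromRel fun u v => ((u:Set X) ∩ v ∩ C).Nonempty
  have hmem : ∀ z : X, ∃ u : U, z ∈ (u : Set X) := fun z => by
    have : z ∈ ⋃₀ U := hU ▸ mem_univ z
    obtain ⟨u, hu, hz⟩ := this
    exact ⟨⟨u, hu⟩, hz⟩
  obtain ⟨u, hxu⟩ := hmem x
  obtain ⟨w, hyw⟩ := hmem y
  have hreach : G.Reachable u w := by
    by_contra hnr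
    let A : Set X := ⋃ v ∈ {v : U | G.Reachable u v}, (v : Set X)
    let B : Set X := ⋃ v ∈ {v : U | ¬ G.Reachable u v}, (v : Set X)
    have hA : IsOpen A := isOpen_biUnion fun v _ => hUo v v.2
    have hB : IsOpen B := isOpen_biUnion fun v _ => hUo v v.2
    obtain ⟨z, hzC, hzA, hzB⟩ := hC A B hA hB (by
      intro z _
      obtain ⟨v, hv⟩ := hmem z
      by_cases h : G.Reachable u v
      · exact Or.inl (mem_biUnion h hv)
      · exact Or.inr (mem_biUnion h hv))
      ⟨x, hx, mem_biUnion (show u ∈ {v : U | G.Reachable u v} from SimpleGraph.Reachable.refl u) hxu⟩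
      ⟨y, hy, mem_biUnion (show w ∈ {v : U | ¬ G.Reachable u v} from hnr) hyw⟩
    obtain ⟨a, ha, hza⟩ := mem_iUnion₂.1 hzA
    obtain ⟨b, hb, hzb⟩ := mem_iUnion₂.1 hzB
    have ha' : G.Reachable u a := ha
    have hb' : ¬ G.Reachable u b := hb
    by_cases hab : a = b
    · exact hb' (hab ▸ ha')
    · exact hb' (ha'.trans (SimpleGraph.Adj.reachable
        ((SimpleGraph.fromRel_adj _ _ _).2 ⟨hab, Or.inl ⟨z, ⟨hza, hzb⟩, hzC⟩⟩)))
  have hwalk : ∀ (a b : U) (p : G.Walk a b) (x : X), x ∈ C → x ∈ (a : Set X) → y ∈ (b : Set X) →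
      ∃ c : ℕ → X, c 0 = x ∧ (∀ i, p.length < i → c i = y) ∧ (∀ i, c i ∈ C) ∧
      ∀ i, ∃ u ∈ U, c i ∈ u ∧ c (i+1) ∈ u := by
    intro a b p
    induction p with
    | @nil a =>
      intro x hx hxa hyb
      refine ⟨fun i => if i = 0 then x else y, by simp, ?_, ?_, ?_⟩
      · intro i hi
        simp only [SimpleGraph.Walk.length_nil] at hi
        simp [hi.ne']
      · intro i; dsimp only; split_ifs <;> assumption
      · intro i; refine ⟨a, a.2, ?_, ?_⟩
        · dsimp only; split_ifs <;> assumption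
        · simpa using hyb
    | @cons a b d h p ih =>
      intro x hx hxa hyd
      obtain ⟨z, hza, hzb, hzC⟩ : ∃ z, z ∈ (a : Set X) ∧ z ∈ (b : Set X) ∧ z ∈ C := by
        rcases ((SimpleGraph.fromRel_adj _ _ _).1 h).2 with ⟨z, ⟨h1, h2⟩, h3⟩ | ⟨z, ⟨h1, h2⟩, h3⟩
        · exact ⟨z, h1, h2, h3⟩
        · exact ⟨z, h2, h1, h3⟩
      obtain ⟨c, hc0, hce, hcC, hcU⟩ := ih z hzC hzb hyd
      refine ⟨fun i => Nat.casesOn i x c, rfl, ?_, ?_, ?_⟩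
      · intro i hi
        rw [SimpleGraph.Walk.length_cons] at hi
        cases i with
        | zero => omega
        | succ i => exact hce i (by omega)
      · intro i
        cases i with
        | zero => exact hx
        | succ i => exact hcC i
      · intro i
        cases i with
        | zero => exact ⟨a, a.2, hxa, by simpa [hc0] using hza⟩
        | succ i => exact hcU i
  obtain ⟨p⟩ := hreach
  obtain ⟨c, h0, h1, h2, h3⟩ := hwalk u w p.toPath x hx hxu hyw
  refine ⟨c, h0, h1 _ ?_, h2, h3⟩
  have := p.toPath.2.length_lt
  rw [← Nat.card_eq_fintype_card, Nat.card_coe_set_eq] at this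
  omega

theorem fp_cover {X : Type} [MetricSpace X] [CompactSpace X] [LocallyConnectedSpace X]
    (ε : ℝ) (hε : 0 < ε) : ∃ U : Set (Set X), U.Finite ∧ (∀ u ∈ U, IsOpen u) ∧
      ⋃₀ U = Set.univ ∧ (∀ u ∈ U, IsPreconnected u) ∧ ∀ u ∈ U, ∀ x ∈ u, ∀ y ∈ u, dist x y ≤ ε := by
  have h : ∀ x : X, ∃ V : Set X, V ⊆ Metric.ball x (ε/2) ∧ IsOpen V ∧ x ∈ V ∧ IsConnected V :=
    fun x => locallyConnectedSpace_iff_subsets_isOpen_isConnected.1 inferInstance x _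
      (Metric.ball_mem_nhds x (by positivity))
  choose V hVs hVo hxV hVc using h
  obtain ⟨t, ht⟩ := isCompact_univ.elim_finite_subcover V hVo
    (fun x _ => mem_iUnion.2 ⟨x, hxV x⟩)
  refine ⟨V '' t, t.finite_toSet.image _, ?_, ?_, ?_, ?_⟩
  · rintro _ ⟨x, _, rfl⟩; exact hVo x
  · rw [sUnion_image]; exact univ_subset_iff.1 ht
  · rintro _ ⟨x, _, rfl⟩; exact (hVc x).isPreconnected
  · rintro _ ⟨x, _, rfl⟩ a ha b hb
    have h1 := Metric.mem_ball.1 (hVs x ha)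
    have h2 := Metric.mem_ball'.1 (hVs x hb)
    have := dist_triangle a x b
    linarith

theorem fp_locPath {X : Type} [MetricSpace X] [CompactSpace X] [LocallyConnectedSpace X] :
    LocallyPathConnectedSpace X := by
  rw [locallyPathConnectedSpace_iff_pathComponentIn_mem_nhds]
  intro x u hu hxu
  obtain ⟨ε, hε, hb⟩ := Metric.isOpen_iff.1 hu x hxu
  set e := ε / 3 with he
  have he0 : 0 < e := by positivity
  have hcov := fun n : ℕ => fp_cover (X := X) (e / 2 / 2 ^ n) (by positivity)
  choose U hUf hUo hU hUc hUd using hcov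
  let R : ℕ → X → X → Prop := fun n x y => ∃ u ∈ U n, x ∈ u ∧ y ∈ u
  have hmem : ∀ n (z : X), ∃ u ∈ U n, z ∈ u := fun n z => by
    have : z ∈ ⋃₀ U n := hU n ▸ mem_univ z
    exact this
  obtain ⟨v, hv, hxv⟩ := hmem 0 x
  refine Filter.mem_of_superset ((hUo 0 v hv).mem_nhds hxv) fun y hy => ?_
  obtain ⟨f, hf, h0, h1, hfd⟩ := fp_path_of_chains e he0 R (fun n => (U (n+1)).ncard + 1)
    (fun n => by omega)
    (fun n x => by obtain ⟨u, h, h'⟩ := hmem n x; exact ⟨u, h, h', h'⟩)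
    (fun n x y ⟨u, h, h1, h2⟩ => hUd n u h x h1 y h2)
    (fun n x y ⟨u, h, h1, h2⟩ => by
      obtain ⟨c, hc0, hce, hcC, hcU⟩ := fp_chain u (hUc n u h) (U (n+1)) (hUf _) (hUo _) (hU _)
        x y h1 h2
      exact ⟨c, hc0, hce, fun i _ => hcU i, fun i => hUd n u h x h1 _ (hcC i)⟩)
    x y ⟨v, hv, hxv, hy⟩
  refine ⟨⟨⟨fun t => f t, by fun_prop⟩, by simpa using h0, by simpa using h1⟩, fun t => hb ?_⟩
  rw [Metric.mem_ball']
  have := hfd t t.2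
  show dist x (f t) < ε
  linarith

theorem fp_minimal {X : Type} [MetricSpace X] (f : ℝ → X) (hf : Continuous f) :
    ∃ K : Set ℝ, IsClosed K ∧ K ⊆ Icc 0 1 ∧ (0:ℝ) ∈ K ∧ (1:ℝ) ∈ K ∧
      (∀ a ∈ K, ∀ b ∈ K, a < b → Ioo a b ∩ K = ∅ → f a = f b) ∧
      (∀ a ∈ K, ∀ b ∈ K, a < b → f a = f b → Ioo a b ∩ K = ∅) := by
  let S : Set (Set ℝ) := {K | IsClosed K ∧ K ⊆ Icc 0 1 ∧ (0:ℝ) ∈ K ∧ (1:ℝ) ∈ K ∧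
      (∀ a ∈ K, ∀ b ∈ K, a < b → Ioo a b ∩ K = ∅ → f a = f b)}
  have hI : Icc (0:ℝ) 1 ∈ S := by
    refine ⟨isClosed_Icc, Subset.rfl, by simp, by simp, ?_⟩
    intro a ha b hb hab h
    exfalso
    have : (a + b) / 2 ∈ Ioo a b ∩ Icc (0:ℝ) 1 :=
      ⟨⟨by linarith, by linarith⟩, by linarith [ha.1, hb.1], by linarith [ha.2, hb.2]⟩
    rw [h] at this; exact this
  obtain ⟨K, -, hK⟩ := zorn_superset_nonempty S (by
    intro c hcS hc hcne
    obtain ⟨K₀, hK₀⟩ := hcne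
    refine ⟨⋂₀ c, ⟨isClosed_sInter fun K hK => (hcS hK).1, (sInter_subset_of_mem hK₀).trans
      (hcS hK₀).2.1, fun K hK => (hcS hK).2.2.1, fun K hK => (hcS hK).2.2.2.1, ?_⟩,
      fun K hK => sInter_subset_of_mem hK⟩
    intro a ha b hb hab hgap
    by_contra hne
    have hpos : 0 < dist (f a) (f b) := dist_pos.2 hne
    obtain ⟨d1, hd1, h1⟩ := Metric.continuous_iff.1 hf a (dist (f a) (f b) / 2) (by positivity)
    obtain ⟨d2, hd2, h2⟩ := Metric.continuous_iff.1 hf b (dist (f a) (f b) / 2) (by positivity)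
    obtain ⟨e, he, he1, he2, he3⟩ : ∃ e > 0, e < d1 ∧ e < d2 ∧ e < (b - a) / 2 := by
      refine ⟨min (min d1 d2) ((b - a)/2) / 2, ?_, ?_, ?_, ?_⟩
      · have : 0 < b - a := by linarith
        positivity
      all_goals
        have h0 : 0 < min (min d1 d2) ((b - a)/2) := by
          have : 0 < b - a := by linarith
          positivity
        have h1 := min_le_left (min d1 d2) ((b - a)/2)
        have h2 := min_le_right (min d1 d2) ((b - a)/2)
        have h3 := min_le_left d1 d2
        have h4 := min_le_right d1 d2
        linarith
    obtain ⟨K, hKc, hKe⟩ : ∃ K ∈ c, Icc (a + e) (b - e) ∩ K = ∅ := by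
      have : Nonempty c := ⟨⟨K₀, hK₀⟩⟩
      obtain ⟨i, hi⟩ := (isCompact_Icc : IsCompact (Icc (a + e) (b - e))).elim_directed_family_closed
        (fun i : c => (i : Set ℝ)) (fun i => (hcS i.2).1) (by
          rw [← sInter_eq_iInter]
          ext z
          simp only [mem_inter_iff, mem_empty_iff_false, iff_false]
          rintro ⟨hz, hz'⟩
          have : z ∈ Ioo a b ∩ ⋂₀ c := ⟨⟨by linarith [hz.1], by linarith [hz.2]⟩, hz'⟩
          rw [hgap] at this; exact this) (by
          intro i j
          rcases hc.total i.2 j.2 with h | h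
          · exact ⟨i, Subset.rfl, h⟩
          · exact ⟨j, h, Subset.rfl⟩)
      exact ⟨i, i.2, hi⟩
    have hKS := hcS hKc
    -- last point of K in [a, a+e], first point in [b-e, b]
    have hcp1 : IsCompact (K ∩ Icc a (a + e)) := isCompact_Icc.inter_left hKS.1
    have hcp2 : IsCompact (K ∩ Icc (b - e) b) := isCompact_Icc.inter_left hKS.1
    obtain ⟨a', ha', hmax⟩ := hcp1.exists_isGreatest ⟨a, ha K hKc, by constructor <;> linarith⟩
    obtain ⟨b', hb', hmin⟩ := hcp2.exists_isLeast ⟨b, hb K hKc, by constructor <;> linarith⟩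
    have hlt : a' < b' := by linarith [ha'.2.2, hb'.2.1]
    have heq : f a' = f b' := by
      refine hKS.2.2.2.2 a' ha'.1 b' hb'.1 hlt ?_
      ext z
      simp only [mem_inter_iff, mem_empty_iff_false, iff_false]
      rintro ⟨hz, hzK⟩
      have hnz : z ∉ Icc (a + e) (b - e) := fun hz' => by
        have : z ∈ Icc (a + e) (b - e) ∩ K := ⟨hz', hzK⟩
        rw [hKe] at this; exact this
      by_cases hza : z ≤ a + e
      · have := hmax ⟨hzK, by linarith [hz.1, ha'.2.1], hza⟩
        linarith [hz.1]
      · have hzb : b - e ≤ z := by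
          by_contra hh
          exact hnz ⟨by linarith, by linarith⟩
        have := hmin ⟨hzK, hzb, by linarith [hz.2, hb'.2.2]⟩
        linarith [hz.2]
    have h3 := h1 a' (by rw [Real.dist_eq, abs_lt]; constructor <;> linarith [ha'.2.1, ha'.2.2])
    have h4 := h2 b' (by rw [Real.dist_eq, abs_lt]; constructor <;> linarith [hb'.2.1, hb'.2.2])
    have := dist_triangle_left (f a) (f b) (f a')
    rw [heq] at this h3
    linarith) _ hI
  obtain ⟨h1, h2, h3, h4, h5⟩ := hK.1
  refine ⟨K, h1, h2, h3, h4, h5, ?_⟩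
  intro a ha b hb hab hfab
  have hKS : K \ Ioo a b ∈ S := by
    refine ⟨h1.sdiff isOpen_Ioo, sdiff_subset.trans h2, ⟨h3, fun h => ?_⟩, ⟨h4, fun h => ?_⟩, ?_⟩
    · linarith [h.1, (h2 ha).1]
    · linarith [h.2, (h2 hb).2]
    · rintro p ⟨hp, hp'⟩ q ⟨hq, hq'⟩ hpq hgap
      by_cases hh : Ioo p q ∩ K = ∅
      · exact h5 p hp q hq hpq hh
      · obtain ⟨z, hz, hzK⟩ := nonempty_iff_ne_empty.2 hh
        have hzab : z ∈ Ioo a b := by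
          by_contra hn
          have : z ∈ Ioo p q ∩ (K \ Ioo a b) := ⟨hz, hzK, hn⟩
          rw [hgap] at this; exact this
        have hpa : p ≤ a := by
          by_contra hn
          exact hp' ⟨by linarith, by linarith [hz.1, hzab.2]⟩
        have hbq : b ≤ q := by
          by_contra hn
          exact hq' ⟨by linarith [hz.2, hzab.1], by linarith⟩
        have hap : a ≤ p := by
          by_contra hn
          have : a ∈ Ioo p q ∩ (K \ Ioo a b) :=
            ⟨⟨by linarith, by linarith⟩, ha, fun h => lt_irrefl _ h.1⟩
          rw [hgap] at this; exact this
        have hqb : q ≤ b := by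
          by_contra hn
          have : b ∈ Ioo p q ∩ (K \ Ioo a b) :=
            ⟨⟨by linarith, by linarith⟩, hb, fun h => lt_irrefl _ h.2⟩
          rw [hgap] at this; exact this
        rw [le_antisymm hpa hap, le_antisymm hqb hbq]; exact hfab
  have hle : K ⊆ K \ Ioo a b := hK.2 hKS sdiff_subset
  ext z
  simp only [mem_inter_iff, mem_empty_iff_false, iff_false]
  rintro ⟨hz, hzK⟩
  exact (hle hzK).2 hz

theorem fp_monotone_path {X : Type} [MetricSpace X] (f : ℝ → X) (hf : Continuous f) :
    ∃ g : ℝ → X, Continuous g ∧ g 0 = f 0 ∧ g 1 = f 1 ∧ (∀ t, g t ∈ f '' Icc 0 1) ∧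
      ∀ s ∈ Icc (0:ℝ) 1, ∀ t ∈ Icc (0:ℝ) 1, s ≤ t → g s = g t → ∀ u ∈ Icc s t, g u = g s := by
  obtain ⟨K, hKc, hKI, h0, h1, hgap, hmin⟩ := fp_minimal f hf
  have hk : ∀ t : ℝ, ∃ k, t ∈ Icc (0:ℝ) 1 → IsGreatest (K ∩ Icc 0 t) k := by
    intro t
    by_cases ht : t ∈ Icc (0:ℝ) 1
    · obtain ⟨k, hk⟩ := (isCompact_Icc.inter_left hKc : IsCompact (K ∩ Icc 0 t)).exists_isGreatest
        ⟨0, h0, le_rfl, ht.1⟩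
      exact ⟨k, fun _ => hk⟩
    · exact ⟨0, fun h => absurd h ht⟩
  choose k hk using hk
  have hkK : ∀ t ∈ Icc (0:ℝ) 1, k t ∈ K := fun t ht => (hk t ht).1.1
  have hkle : ∀ t ∈ Icc (0:ℝ) 1, k t ≤ t := fun t ht => (hk t ht).1.2.2
  have hkmax : ∀ t ∈ Icc (0:ℝ) 1, ∀ z ∈ K, z ≤ t → z ≤ k t := fun t ht z hz hzt =>
    (hk t ht).2 ⟨hz, (hKI hz).1, hzt⟩
  have hkmono : ∀ s ∈ Icc (0:ℝ) 1, ∀ t ∈ Icc (0:ℝ) 1, s ≤ t → k s ≤ k t := fun s hs t ht hst =>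
    hkmax t ht _ (hkK s hs) ((hkle s hs).trans hst)
  have hkeq : ∀ t ∈ K, k t = t := fun t ht =>
    le_antisymm (hkle t (hKI ht)) (hkmax t (hKI ht) t ht le_rfl)
  have hkc : ContinuousOn (fun t => f (k t)) (Icc 0 1) := by
    have huc : UniformContinuousOn f (Icc 0 1) :=
      isCompact_Icc.uniformContinuousOn_of_continuous hf.continuousOn
    rw [Metric.uniformContinuousOn_iff] at huc
    have key : ∀ e > 0, ∃ d > 0, ∀ s ∈ Icc (0:ℝ) 1, ∀ t ∈ Icc (0:ℝ) 1, s ≤ t → t - s < d →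
        dist (f (k s)) (f (k t)) < e := by
      intro e he
      obtain ⟨d, hd, H⟩ := huc e he
      refine ⟨d, hd, fun s hs t ht hst hd' => ?_⟩
      by_cases hks : k t ≤ s
      · have : k s = k t := le_antisymm (hkmono s hs t ht hst) (hkmax s hs _ (hkK t ht) hks)
        rw [this, dist_self]; exact he
      · push Not at hks
        obtain ⟨l, hl, hlmin⟩ := (isCompact_Icc.inter_left hKc :
          IsCompact (K ∩ Icc s 1)).exists_isLeast ⟨k t, hkK t ht, hks.le, (hKI (hkK t ht)).2⟩
        have hlt : l ≤ k t := hlmin ⟨hkK t ht, hks.le, (hKI (hkK t ht)).2⟩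
        have hfl : f (k s) = f l := by
          rcases eq_or_lt_of_le ((hkle s hs).trans hl.2.1) with h | h
          · rw [h]
          · refine hgap _ (hkK s hs) _ hl.1 h ?_
            ext z
            simp only [mem_inter_iff, mem_empty_iff_false, iff_false]
            rintro ⟨hz, hzK⟩
            rcases le_total z s with h' | h'
            · linarith [hkmax s hs z hzK h', hz.1]
            · linarith [hlmin ⟨hzK, h', (hKI hzK).2⟩, hz.2]
        rw [hfl]
        refine H l (hKI hl.1) (k t) (hKI (hkK t ht)) ?_
        rw [Real.dist_eq, abs_lt]
        constructor <;> linarith [hkle t ht, hl.2.1]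
    rw [Metric.continuousOn_iff]
    intro t ht e he
    obtain ⟨d, hd, H⟩ := key e he
    refine ⟨d, hd, fun s hs hst => ?_⟩
    rw [Real.dist_eq, abs_lt] at hst
    rcases le_total s t with h | h
    · exact H s hs t ht h (by linarith)
    · rw [dist_comm]; exact H t ht s hs h (by linarith)
  have hpr : ∀ t ∈ Icc (0:ℝ) 1, ((projIcc (0:ℝ) 1 zero_le_one t : Icc (0:ℝ) 1) : ℝ) = t :=
    fun t ht => by rw [projIcc_of_mem _ ht]
  refine ⟨fun t => f (k (projIcc (0:ℝ) 1 zero_le_one t)), ?_, ?_, ?_, ?_, ?_⟩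
  · exact (continuousOn_iff_continuous_domRestrict.1 hkc).comp continuous_projIcc
  · dsimp only; rw [hpr 0 (by simp), hkeq 0 h0]
  · dsimp only; rw [hpr 1 (by simp), hkeq 1 h1]
  · intro t; exact ⟨_, hKI (hkK _ (Subtype.coe_prop _)), rfl⟩
  · intro s hs t ht hst hfst u hu
    dsimp only at hfst ⊢
    have hu' : u ∈ Icc (0:ℝ) 1 := ⟨hs.1.trans hu.1, hu.2.trans ht.2⟩
    rw [hpr s hs, hpr t ht] at hfst
    rw [hpr s hs, hpr u hu']
    have a1 := hkmono s hs u hu' hu.1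
    have a2 := hkmono u hu' t ht hu.2
    rcases eq_or_lt_of_le a1 with h | h
    · rw [h]
    rcases eq_or_lt_of_le a2 with h' | h'
    · rw [h', hfst]
    have := hmin _ (hkK s hs) _ (hkK t ht) (h.trans h') hfst
    have hh : k u ∈ Ioo (k s) (k t) ∩ K := ⟨⟨h, h'⟩, hkK u hu'⟩
    rw [this] at hh; exact hh.elim

theorem fp_arc {X : Type} [MetricSpace X] (f : ℝ → X) (hf : Continuous f) (hne : f 0 ≠ f 1) :
    ∃ h : ℝ → X, Continuous h ∧ InjOn h (Icc 0 1) ∧ h 0 = f 0 ∧ h 1 = f 1 ∧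
      ∀ t, h t ∈ f '' Icc 0 1 := by
  obtain ⟨g, hg, hg0, hg1, hgf, hgm⟩ := fp_monotone_path f hf
  let A : ℝ × ℝ → ℝ → ℝ := fun p v => dist (g p.1) (g (p.1 + v * max (p.2 - p.1) 0))
  let m : ℝ → ℝ → ℝ := fun q t => sSup (A (q, t) '' Icc 0 1)
  have hAc : Continuous ↿A := by
    simp only [A, Function.HasUncurry.uncurry]
    fun_prop
  have hmc : Continuous (fun p : ℝ × ℝ => m p.1 p.2) := isCompact_Icc.continuous_sSup hAc
  have hAc' : ∀ p, Continuous (A p) := fun p => by simp only [A]; fun_prop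
  have hbdd : ∀ p, BddAbove (A p '' Icc 0 1) := fun p => (isCompact_Icc.image (hAc' p)).bddAbove
  have hmge : ∀ q t u, u ∈ Icc q t → dist (g q) (g u) ≤ m q t := by
    intro q t u hu
    refine le_csSup (hbdd _) ?_
    rcases eq_or_lt_of_le (hu.1.trans hu.2) with h | h
    · refine ⟨0, by simp, ?_⟩
      have : u = q := le_antisymm (h ▸ hu.2) hu.1
      simp [A, this]
    · have hp : 0 < t - q := by linarith
      refine ⟨(u - q) / (t - q), ⟨div_nonneg (by linarith [hu.1]) hp.le,
        (div_le_one hp).2 (by linarith [hu.2])⟩, ?_⟩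
      simp only [A]
      rw [max_eq_left hp.le, div_mul_cancel₀ _ hp.ne', add_sub_cancel]
  have hmle : ∀ q t b, 0 ≤ b → (∀ u ∈ Icc q t, dist (g q) (g u) ≤ b) → m q t ≤ b := by
    intro q t b hb h
    refine csSup_le ⟨_, 0, by simp, rfl⟩ ?_
    rintro _ ⟨v, hv, rfl⟩
    simp only [A]
    rcases le_total t q with h' | h'
    · rw [max_eq_right (by linarith), mul_zero, add_zero, dist_self]; exact hb
    · have : 0 ≤ t - q := by linarith
      rw [max_eq_left this]
      refine h _ ⟨?_, ?_⟩
      · nlinarith [hv.1]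
      · nlinarith [hv.2]
  have hm0 : ∀ q t, 0 ≤ m q t := by
    intro q t
    refine le_csSup (hbdd _) ⟨0, by simp, by simp [A]⟩
  have hmmono : ∀ q s t, s ≤ t → m q s ≤ m q t := fun q s t hst =>
    hmle q s _ (hm0 q t) fun u hu => hmge q t u ⟨hu.1, hu.2.trans hst⟩
  let φ : ℝ → ℝ := fun t => ∫ q in (0:ℝ)..1, m q t
  have hφc : Continuous φ := by
    refine intervalIntegral.continuous_parametric_intervalIntegral_of_continuous' (f := fun t q => m q t) ?_ 0 1
    exact hmc.comp continuous_swap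
  have hmi : ∀ t, Continuous fun q => m q t := fun t => hmc.comp (by fun_prop : Continuous fun q : ℝ => (q, t))
  have hφlt : ∀ s ∈ Icc (0:ℝ) 1, ∀ t ∈ Icc (0:ℝ) 1, s < t → g s ≠ g t → φ s < φ t := by
    intro s hs t ht hst hgne
    have : 0 < ∫ q in (0:ℝ)..1, (m q t - m q s) := by
      refine intervalIntegral.integral_pos zero_lt_one ((hmi t).sub (hmi s)).continuousOn ?_
        ⟨s, hs, ?_⟩
      · intro q _; linarith [hmmono q s t hst.le]
      · have h1 := hmge s t t ⟨hst.le, le_rfl⟩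
        have h2 := hmle s s 0 le_rfl (fun u hu => by
          rw [le_antisymm hu.2 hu.1, dist_self])
        have := dist_pos.2 hgne
        linarith
    rw [intervalIntegral.integral_sub ((hmi t).intervalIntegrable _ _)
      ((hmi s).intervalIntegrable _ _)] at this
    simp only [φ]; linarith
  have hφeq : ∀ s ∈ Icc (0:ℝ) 1, ∀ t ∈ Icc (0:ℝ) 1, s ≤ t → g s = g t → φ s = φ t := by
    intro s hs t ht hst hgst
    have hcon := hgm s hs t ht hst hgst
    simp only [φ]
    congr 1; ext q
    refine le_antisymm (hmmono q s t hst) (hmle q t _ (hm0 q s) fun u hu => ?_)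
    rcases le_total u s with h | h
    · exact hmge q s u ⟨hu.1, h⟩
    · rw [hcon u ⟨h, hu.2⟩]
      rcases le_total q s with h' | h'
      · exact hmge q s s ⟨h', le_rfl⟩
      · rw [hcon q ⟨h', hu.1.trans hu.2⟩, dist_self]; exact hm0 q s
  have hφmono : ∀ s ∈ Icc (0:ℝ) 1, ∀ t ∈ Icc (0:ℝ) 1, s ≤ t → φ s ≤ φ t := by
    intro s hs t ht hst
    by_cases h : g s = g t
    · exact (hφeq s hs t ht hst h).le
    · exact (hφlt s hs t ht (lt_of_le_of_ne hst (fun e => h (by rw [e]))) h).le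
  have hiff : ∀ s ∈ Icc (0:ℝ) 1, ∀ t ∈ Icc (0:ℝ) 1, (φ s = φ t ↔ g s = g t) := by
    intro s hs t ht
    constructor
    · intro h
      by_contra hn
      rcases lt_trichotomy s t with h' | h' | h'
      · exact (hφlt s hs t ht h' hn).ne h
      · exact hn (by rw [h'])
      · exact (hφlt t ht s hs h' (Ne.symm hn)).ne h.symm
    · intro h
      rcases le_total s t with h' | h'
      · exact hφeq s hs t ht h' h
      · exact (hφeq t ht s hs h' h.symm).symm
  have h0I : (0:ℝ) ∈ Icc (0:ℝ) 1 := by simp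
  have h1I : (1:ℝ) ∈ Icc (0:ℝ) 1 := by simp
  have h01 : φ 0 < φ 1 := hφlt 0 h0I 1 h1I zero_lt_one (by rw [hg0, hg1]; exact hne)
  let J := Icc (0:ℝ) 1
  let Φ : J → J := fun t => ⟨(φ t - φ 0) / (φ 1 - φ 0), by
    have a1 := hφmono 0 h0I t t.2 t.2.1
    have a2 := hφmono t t.2 1 h1I t.2.2
    exact ⟨div_nonneg (by linarith) (by linarith), (div_le_one (by linarith)).2 (by linarith)⟩⟩
  have hΦc : Continuous Φ := by
    refine Continuous.subtype_mk ?_ _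
    exact ((hφc.comp continuous_subtype_val).sub continuous_const).div_const _
  have hΦs : Function.Surjective Φ := by
    intro y
    have hp : 0 < φ 1 - φ 0 := by linarith
    obtain ⟨t, ht, hty⟩ := intermediate_value_Icc zero_le_one hφc.continuousOn
      (show φ 0 + y * (φ 1 - φ 0) ∈ Icc (φ 0) (φ 1) from
        ⟨by nlinarith [y.2.1], by nlinarith [y.2.2]⟩)
    refine ⟨⟨t, ht⟩, Subtype.ext ?_⟩
    simp only [Φ]
    rw [hty, add_sub_cancel_left, mul_div_cancel_right₀ _ hp.ne']
  have hΦiff : ∀ s t : J, Φ s = Φ t ↔ g s = g t := by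
    intro s t
    rw [← hiff s s.2 t t.2]
    have hp : φ 1 - φ 0 ≠ 0 := by linarith
    rw [Subtype.ext_iff]
    change (φ s - φ 0) / (φ 1 - φ 0) = (φ t - φ 0) / (φ 1 - φ 0) ↔ _
    rw [div_left_inj' hp, sub_left_inj]
  have hq : Topology.IsQuotientMap Φ := hΦc.isClosedMap.isQuotientMap hΦc hΦs
  obtain ⟨σ, hσ⟩ := hΦs.hasRightInverse
  have hσc : Continuous (fun y : J => g (σ y)) := by
    rw [hq.continuous_iff]
    have : (fun y : J => g (σ y)) ∘ Φ = fun t : J => g t := by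
      ext t; exact (hΦiff _ _).1 (hσ (Φ t))
    rw [this]; exact hg.comp continuous_subtype_val
  have hgσ : ∀ t : J, g (σ (Φ t)) = g t := fun t => (hΦiff _ _).1 (hσ (Φ t))
  refine ⟨fun t => g (σ (projIcc 0 1 zero_le_one t)), hσc.comp continuous_projIcc, ?_, ?_, ?_, ?_⟩
  · intro s hs t ht hst
    have : σ (projIcc 0 1 zero_le_one s) = σ (projIcc 0 1 zero_le_one s) := rfl
    have h := (hΦiff _ _).2 hst
    rw [hσ, hσ, projIcc_of_mem _ hs, projIcc_of_mem _ ht] at h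
    exact congrArg Subtype.val h
  · have : projIcc (0:ℝ) 1 zero_le_one 0 = Φ ⟨0, h0I⟩ := by
      rw [projIcc_of_mem _ h0I]; apply Subtype.ext; simp [Φ]
    dsimp only
    rw [this, hgσ, hg0]
  · have : projIcc (0:ℝ) 1 zero_le_one 1 = Φ ⟨1, h1I⟩ := by
      rw [projIcc_of_mem _ h1I]; apply Subtype.ext
      simp only [Φ]; rw [div_self (by linarith)]
    dsimp only
    rw [this, hgσ, hg1]
  · intro t; exact hgf _

theorem fp_avoid (S : Set (ℂ × ℂ)) (hS : S.Finite) :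
    ∃ c : ℂ, ‖c‖ < 1/4 ∧ ∀ p ∈ S, -c ∉ segment ℝ p.1 p.2 := by
  have hz : MeasureTheory.volume (⋃ p ∈ S, segment ℝ p.1 p.2) = 0 := by
    rw [MeasureTheory.measure_biUnion_null_iff hS.countable]
    intro p _
    have hne : affineSpan ℝ {p.1, p.2} ≠ ⊤ := by
      intro h
      have h1 : Module.finrank ℝ (vectorSpan ℝ {p.1, p.2}) ≤ 1 :=
        collinear_iff_finrank_le_one.1 (collinear_pair ℝ p.1 p.2)
      rw [← direction_affineSpan, h, AffineSubspace.direction_top, finrank_top,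
        Complex.finrank_real_complex] at h1
      omega
    refine MeasureTheory.measure_mono_null ?_
      (MeasureTheory.Measure.addHaar_affineSubspace MeasureTheory.volume _ hne)
    rw [← convexHull_pair]
    exact convexHull_subset_affineSpan _
  have hb : 0 < MeasureTheory.volume (Metric.ball (0:ℂ) (1/4)) :=
    Metric.measure_ball_pos _ _ (by norm_num)
  have : ¬ Metric.ball (0:ℂ) (1/4) ⊆ ⋃ p ∈ S, segment ℝ p.1 p.2 := fun h =>
    hb.ne' (MeasureTheory.measure_mono_null h hz)
  obtain ⟨c, hc, hc'⟩ := not_subset.1 this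
  refine ⟨-c, by simpa using hc, fun p hp h => hc' ?_⟩
  rw [neg_neg] at h
  exact mem_biUnion hp h

theorem fp_approx {X : Type} [MetricSpace X] [CompactSpace X] (hdim : CovDimLE X 1)
    (g : C(X, ℂ)) : ∃ h : C(X, ℂ), (∀ x, h x ≠ 0) ∧ ∀ x, ‖h x - g x‖ < 1 := by
  obtain ⟨t, ht⟩ := isCompact_univ.elim_finite_subcover
    (fun x : X => g ⁻¹' Metric.ball (g x) (1/4))
    (fun x => Metric.isOpen_ball.preimage g.continuous)
    (fun x _ => mem_iUnion.2 ⟨x, by simp⟩)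
  obtain ⟨V, hVf, hVo, hVu, hVr, hVn⟩ := hdim
    ((fun x : X => g ⁻¹' Metric.ball (g x) (1/4)) '' t) (t.finite_toSet.image _)
    (by rintro _ ⟨x, _, rfl⟩; exact Metric.isOpen_ball.preimage g.continuous)
    (by rw [sUnion_image]; exact univ_subset_iff.1 ht)
  have hz : ∀ v : V, ∃ z : ℂ, ∀ x ∈ (v : Set X), g x ∈ Metric.ball z (1/4) := by
    intro v
    obtain ⟨_, ⟨x, _, rfl⟩, h⟩ := hVr v v.2
    exact ⟨g x, fun y hy => h hy⟩
  choose z hz using hz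
  have : Finite V := hVf
  obtain ⟨φ, hφ⟩ := PartitionOfUnity.exists_isSubordinate isClosed_univ (fun v : V => (v : Set X))
    (fun v => hVo v v.2) (by rw [← sUnion_eq_iUnion, hVu])
  have hmem : ∀ (v : V) (x : X), φ v x ≠ 0 → x ∈ (v : Set X) := fun v x h =>
    hφ v (subset_tsupport _ h)
  obtain ⟨c, hc, hcS⟩ := fp_avoid (range fun p : V × V => (z p.1, z p.2)) (finite_range _)
  have hcont : Continuous fun x => ∑ᶠ v, φ v x • z v :=
    PartitionOfUnity.continuous_finsum_smul (f := φ) (g := fun v _ => z v)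
      fun _ _ _ => continuousAt_const
  refine ⟨⟨fun x => (∑ᶠ v, φ v x • z v) + c, hcont.add continuous_const⟩, ?_, ?_⟩
  · intro x h0
    have hx : (∑ᶠ v, φ v x • z v) = -c := eq_neg_of_add_eq_zero_left h0
    have key : ∃ a b : V, ∀ v : V, x ∈ (v : Set X) → v = a ∨ v = b := by
      have hx' : x ∈ ⋃₀ V := hVu ▸ mem_univ x
      obtain ⟨a, ha, hxa⟩ := hx'
      by_contra! hcon
      obtain ⟨b, hxb, hba, -⟩ := hcon ⟨a, ha⟩ ⟨a, ha⟩
      obtain ⟨d, hxd, hda, hdb⟩ := hcon ⟨a, ha⟩ b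
      have h3 : 2 < {v ∈ V | x ∈ v}.ncard := by
        rw [Set.two_lt_ncard_iff (hVf.subset (sep_subset _ _))]
        exact ⟨a, b, d, ⟨ha, hxa⟩, ⟨b.2, hxb⟩, ⟨d.2, hxd⟩, fun h => hba (Subtype.ext h.symm),
          fun h => hda (Subtype.ext h.symm), fun h => hdb (Subtype.ext h.symm)⟩
      have := hVn x
      omega
    obtain ⟨a, b, hab⟩ := key
    refine hcS _ ⟨(a, b), rfl⟩ ?_
    rw [← hx]
    refine φ.finsum_smul_mem_convex (g := fun v _ => z v) (mem_univ x) ?_ (convex_segment _ _)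
    intro v hv
    rcases hab v (hmem v x hv) with rfl | rfl
    · exact left_mem_segment _ _ _
    · exact right_mem_segment _ _ _
  · intro x
    have : (∑ᶠ v, φ v x • z v) ∈ Metric.ball (g x) (1/4) := by
      refine φ.finsum_smul_mem_convex (g := fun v _ => z v) (mem_univ x) ?_ (convex_ball _ _)
      intro v hv
      exact Metric.mem_ball_comm.1 (hz v x (hmem v x hv))
    rw [mem_ball_iff_norm] at this
    calc ‖(∑ᶠ v, φ v x • z v) + c - g x‖ = ‖((∑ᶠ v, φ v x • z v) - g x) + c‖ := by ring_nf
      _ ≤ _ := norm_add_le _ _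
      _ < 1 := by linarith

theorem fp_lift {X : Type} [TopologicalSpace X] (h : C(X, ℂ)) (h0 : ∀ x, h x ≠ 0)
    {x : X} (γ : Path x x) (hγ : γ.Homotopic (Path.refl x)) :
    ∃ l : C(unitInterval, ℂ), (∀ s, Complex.exp (l s) = h (γ s)) ∧ l 0 = l 1 := by
  let k : C(X, {z : ℂ // z ≠ 0}) := ⟨fun x => ⟨h x, h0 x⟩, by fun_prop⟩
  have hcov := Complex.isCoveringMap_exp
  have hhom : (γ.map k.continuous).Homotopic ((Path.refl x).map k.continuous) := hγ.map k
  obtain ⟨e, he⟩ : ∃ e : ℂ, Complex.exp e = h x := ⟨Complex.log (h x), Complex.exp_log (h0 x)⟩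
  have e1 : (γ.map k.continuous).toContinuousMap 0 = ⟨Complex.exp e, Complex.exp_ne_zero e⟩ := by
    apply Subtype.ext; simp [k, he]
  have e2 : ((Path.refl x).map k.continuous).toContinuousMap 0
      = ⟨Complex.exp e, Complex.exp_ne_zero e⟩ := by
    apply Subtype.ext; simp [k, he]
  have H := hcov.liftPath_apply_one_eq_of_homotopicRel (γ₀ := (γ.map k.continuous).toContinuousMap)
    (γ₁ := ((Path.refl x).map k.continuous).toContinuousMap) hhom e e1 e2
  have hconst : hcov.liftPath ((Path.refl x).map k.continuous).toContinuousMap e e2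
      = .const _ e := by
    symm
    rw [hcov.eq_liftPath_iff']
    refine ⟨?_, rfl⟩
    ext s; simp [k, he]
  refine ⟨hcov.liftPath (γ.map k.continuous).toContinuousMap e e1, fun s => ?_, ?_⟩
  · have := congrFun (hcov.liftPath_lifts (γ.map k.continuous).toContinuousMap e e1) s
    exact congrArg Subtype.val this
  · rw [H, hconst, hcov.liftPath_zero]; rfl

theorem fp_essential {X : Type} [MetricSpace X] [CompactSpace X] (hdim : CovDimLE X 1)
    {x : X} (γ : Path x x)
    (hinj : ∀ s t : unitInterval, γ s = γ t → s = t ∨ (s = 0 ∧ t = 1) ∨ (s = 1 ∧ t = 0)) :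
    ¬ γ.Homotopic (Path.refl x) := by
  intro hhom
  let e : C(unitInterval, ℂ) := ⟨fun s => Complex.exp (2 * Real.pi * Complex.I * (s : ℝ)), by fun_prop⟩
  have he0 : e 0 = 1 := by simp [e]
  have he1 : e 1 = 1 := by simp [e]
  let ρ : unitInterval → range γ := rangeFactorization γ
  have hρc : Continuous ρ := γ.continuous.subtype_mk _
  have hq : Topology.IsQuotientMap ρ :=
    hρc.isClosedMap.isQuotientMap hρc rangeFactorization_surjective
  let ρ' : C(unitInterval, range γ) := ⟨ρ, hρc⟩
  have hq' : Topology.IsQuotientMap ρ' := hq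
  have hfac : Function.FactorsThrough e ρ' := by
    intro s t hst
    have : γ s = γ t := congrArg Subtype.val hst
    rcases hinj s t this with h | ⟨h, h'⟩ | ⟨h, h'⟩
    · rw [h]
    · rw [h, h', he0, he1]
    · rw [h, h', he0, he1]
  let E := hq'.lift e hfac
  have hE : ∀ s, E (ρ' s) = e s := fun s =>
    congrFun (congrArg DFunLike.coe (hq'.lift_comp e hfac)) s
  obtain ⟨g, hg⟩ := E.exists_restrict_eq (isCompact_range γ.continuous).isClosed
  have hgγ : ∀ s, g (γ s) = e s := fun s => by
    rw [← hE, ← hg]; rfl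
  obtain ⟨h, hne, hclose⟩ := fp_approx hdim g
  obtain ⟨l, hl, hl01⟩ := fp_lift h hne γ hhom
  have hen : ∀ s, e s ≠ 0 := fun s => Complex.exp_ne_zero _
  have hnorm : ∀ s, ‖e s‖ = 1 := fun s => by
    have : e s = Complex.exp (((2 * Real.pi * s : ℝ) : ℂ) * Complex.I) := by
      simp only [e, ContinuousMap.coe_mk]; congr 1; push_cast; ring
    rw [this, Complex.norm_exp_ofReal_mul_I]
  have hslit : ∀ s, h (γ s) / e s ∈ Complex.slitPlane := by
    intro s
    left
    have h1 : ‖h (γ s) / e s - 1‖ < 1 := by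
      have := hclose (γ s)
      rw [hgγ] at this
      rw [div_sub_one (hen s), norm_div, hnorm, div_one]; exact this
    have h2 := (Complex.abs_re_le_norm (h (γ s) / e s - 1)).trans_lt h1
    rw [abs_lt, Complex.sub_re, Complex.one_re] at h2
    linarith [h2.1]
  let D : unitInterval → ℂ := fun s =>
    l s - 2 * Real.pi * Complex.I * (s : ℝ) - Complex.log (h (γ s) / e s)
  have hDc : Continuous D := by
    have : Continuous fun s => Complex.log (h (γ s) / e s) := by
      refine Continuous.clog ?_ hslit
      exact (h.continuous.comp γ.continuous).div e.continuous hen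
    have h2 : Continuous fun s : unitInterval => l s - 2 * Real.pi * Complex.I * (s : ℝ) := by
      fun_prop
    exact h2.sub this
  have hDe : ∀ s, Complex.exp (D s) = 1 := by
    intro s
    simp only [D]
    rw [Complex.exp_sub, Complex.exp_sub, hl, Complex.exp_log (Complex.slitPlane_ne_zero (hslit s))]
    exact div_self (div_ne_zero (hne _) (hen s))
  have hconst : D 0 = D 1 := by
    refine Complex.isCoveringMap_exp.const_of_comp hDc ?_ 0 1
    intro a b
    apply Subtype.ext
    show Complex.exp (D a) = Complex.exp (D b)
    rw [hDe, hDe]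
  simp only [D, he0, he1, γ.source, γ.target, hl01] at hconst
  simp [Complex.ext_iff] at hconst
  linarith [Real.pi_pos]

theorem fp_core {X : Type} [MetricSpace X] [CompactSpace X] (hdim : CovDimLE X 1)
    {x : X} (γ : Path x x)
    (hinj : ∀ s t : unitInterval, γ s = γ t → s = t ∨ (s = 0 ∧ t = 1) ∨ (s = 1 ∧ t = 0)) :
    range γ ⊆ HomotopyCore X := by
  have hess := fp_essential hdim γ hinj
  have hred : IsReducedPath γ := by
    right
    rintro ⟨s, t, hst, hs, ht, h, hh⟩
    have hsI : s ∈ unitInterval := ⟨hs, hst.le.trans ht⟩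
    have htI : t ∈ unitInterval := ⟨hs.trans hst.le, ht⟩
    have h' : γ ⟨s, hsI⟩ = γ ⟨t, htI⟩ := by
      rw [← γ.extend_apply hsI, ← γ.extend_apply htI]; exact h
    rcases hinj _ _ h' with h1 | ⟨h1, h2⟩ | ⟨h1, h2⟩
    · exact hst.ne (congrArg Subtype.val h1)
    · have hs0 : s = 0 := congrArg Subtype.val h1
      have ht1 : t = 1 := congrArg Subtype.val h2
      subst hs0 ht1
      refine fp_essential hdim _ ?_ hh
      intro a b hab
      refine hinj a b ?_
      simpa using hab
    · have hs0 : s = 1 := congrArg Subtype.val h1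
      have ht1 : t = 0 := congrArg Subtype.val h2
      linarith
  rintro _ ⟨t, rfl⟩
  simp only [HomotopyCore, mem_iUnion]
  exact ⟨x, γ, ⟨hess, hred⟩, t, rfl⟩

theorem fp_curve {X : Type} [MetricSpace X] (a b : ℝ → X) (ha : Continuous a) (hb : Continuous b)
    (hai : InjOn a (Icc 0 1)) (hbi : InjOn b (Icc 0 1)) (h0 : a 0 ∈ b '' Icc 0 1)
    (h1 : a 1 ∈ b '' Icc 0 1) (m : ℝ) (hm : m ∈ Icc (0:ℝ) 1) (hmb : a m ∉ b '' Icc 0 1) :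
    ∃ (x : X) (γ : Path x x), (∀ s t : unitInterval, γ s = γ t →
      s = t ∨ (s = 0 ∧ t = 1) ∨ (s = 1 ∧ t = 0)) ∧ a m ∈ range γ := by
  have hBc : IsClosed (b '' Icc 0 1) := (isCompact_Icc.image hb).isClosed
  have hA : IsClosed (a ⁻¹' (b '' Icc 0 1)) := hBc.preimage ha
  obtain ⟨s, hs, hsmax⟩ := (isCompact_Icc.inter_left hA :
    IsCompact (a ⁻¹' (b '' Icc 0 1) ∩ Icc 0 m)).exists_isGreatest ⟨0, h0, le_rfl, hm.1⟩
  obtain ⟨t, ht, htmin⟩ := (isCompact_Icc.inter_left hA :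
    IsCompact (a ⁻¹' (b '' Icc 0 1) ∩ Icc m 1)).exists_isLeast ⟨1, h1, hm.2, le_rfl⟩
  have hsm : s < m := lt_of_le_of_ne hs.2.2 (fun h => hmb (h ▸ hs.1))
  have hmt : m < t := lt_of_le_of_ne ht.2.1 (fun h => hmb (h ▸ ht.1))
  have hst : 0 < t - s := by linarith
  have hgap : ∀ p ∈ Icc s t, a p ∈ b '' Icc 0 1 → p = s ∨ p = t := by
    intro p hp hpb
    rcases le_total p m with h | h
    · left; exact le_antisymm (hsmax ⟨hpb, hs.2.1.trans hp.1, h⟩) hp.1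
    · right; exact le_antisymm hp.2 (htmin ⟨hpb, h, hp.2.trans ht.2.2⟩)
  have hI : ∀ p ∈ Icc s t, p ∈ Icc (0:ℝ) 1 := fun p hp =>
    ⟨hs.2.1.trans hp.1, hp.2.trans ht.2.2⟩
  have hsI : s ∈ Icc s t := ⟨le_rfl, by linarith⟩
  have htI : t ∈ Icc s t := ⟨by linarith, le_rfl⟩
  obtain ⟨u, hu, hut⟩ := ht.1
  obtain ⟨v, hv, hvs⟩ := hs.1
  have huv : v - u ≠ 0 := by
    intro h
    have : v = u := by linarith
    rw [this, hut] at hvs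
    linarith [hai (hI t htI) (hI s hsI) hvs]
  let l : ℝ → X := fun τ => if τ ≤ 1/2 then a (s + 2 * τ * (t - s)) else b (u + (2 * τ - 1) * (v - u))
  have hlc : Continuous l := by
    refine Continuous.if_le (by fun_prop) (by fun_prop) continuous_id continuous_const ?_
    intro τ hτ
    have hτ' : τ = 1/2 := hτ
    subst hτ'
    have e1 : s + 2 * (1/2) * (t - s) = t := by ring
    have e2 : u + (2 * (1/2) - 1) * (v - u) = u := by ring
    rw [e1, e2, hut]
  have hl1 : ∀ τ, τ ≤ 1/2 → l τ = a (s + 2 * τ * (t - s)) := fun τ h => if_pos h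
  have hl2 : ∀ τ, ¬ τ ≤ 1/2 → l τ = b (u + (2 * τ - 1) * (v - u)) := fun τ h => if_neg h
  have hl0 : l 0 = a s := by rw [hl1 0 (by norm_num)]; congr 1; ring
  have hle : l 1 = a s := by rw [hl2 1 (by norm_num), ← hvs]; congr 1; ring
  have hp : ∀ τ ∈ Icc (0:ℝ) 1, τ ≤ 1/2 → s + 2 * τ * (t - s) ∈ Icc s t := by
    intro τ hτ h
    constructor <;> nlinarith [hτ.1]
  have hq : ∀ τ ∈ Icc (0:ℝ) 1, ¬ τ ≤ 1/2 → u + (2 * τ - 1) * (v - u) ∈ Icc (0:ℝ) 1 := by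
    intro τ hτ h
    push Not at h
    have e : u + (2 * τ - 1) * (v - u) = (2 - 2 * τ) * u + (2 * τ - 1) * v := by ring
    have c1 : 0 ≤ 2 - 2 * τ := by linarith [hτ.2]
    have c2 : 0 ≤ 2 * τ - 1 := by linarith
    rw [e]
    constructor
    · nlinarith [mul_nonneg c1 hu.1, mul_nonneg c2 hv.1]
    · nlinarith [mul_le_mul_of_nonneg_left hu.2 c1, mul_le_mul_of_nonneg_left hv.2 c2]
  have hmix : ∀ p ∈ Icc (0:ℝ) 1, ∀ q ∈ Icc (0:ℝ) 1, p ≤ 1/2 → ¬ q ≤ 1/2 → l p = l q →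
      p = 0 ∧ q = 1 := by
    intro p hpI q hqI hp2 hq2 h
    rw [hl1 p hp2, hl2 q hq2] at h
    rcases hgap _ (hp p hpI hp2) ⟨_, hq q hqI hq2, h.symm⟩ with e | e
    · have e1 : 2 * p * (t - s) = 0 := by linarith
      have e2 : p = 0 := by
        rcases mul_eq_zero.1 e1 with h' | h'
        · linarith
        · linarith
      rw [e, ← hvs] at h
      have e3 := hbi hv (hq q hqI hq2) h
      have e4 : (2 * q - 2) * (v - u) = 0 := by linarith
      rcases mul_eq_zero.1 e4 with h' | h'
      · exact ⟨e2, by linarith⟩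
      · exact absurd h' huv
    · exfalso
      rw [e, ← hut] at h
      have e3 := hbi hu (hq q hqI hq2) h
      have e4 : (2 * q - 1) * (v - u) = 0 := by linarith
      rcases mul_eq_zero.1 e4 with h' | h'
      · apply hq2; linarith
      · exact absurd h' huv
  refine ⟨a s, ⟨⟨fun τ => l τ, hlc.comp continuous_subtype_val⟩, by simpa using hl0,
    by simpa using hle⟩, ?_, ?_⟩
  · intro p q hpq
    have hpq' : l p = l q := hpq
    by_cases hp2 : (p:ℝ) ≤ 1/2 <;> by_cases hq2 : (q:ℝ) ≤ 1/2
    · left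
      rw [hl1 _ hp2, hl1 _ hq2] at hpq'
      have e := hai (hI _ (hp p p.2 hp2)) (hI _ (hp q q.2 hq2)) hpq'
      have e4 : (p - q : ℝ) * (t - s) = 0 := by linarith
      rcases mul_eq_zero.1 e4 with h' | h'
      · exact Subtype.ext (by linarith)
      · linarith
    · obtain ⟨e1, e2⟩ := hmix p p.2 q q.2 hp2 hq2 hpq'
      exact Or.inr (Or.inl ⟨Subtype.ext e1, Subtype.ext e2⟩)
    · obtain ⟨e1, e2⟩ := hmix q q.2 p p.2 hq2 hp2 hpq'.symm
      exact Or.inr (Or.inr ⟨Subtype.ext e2, Subtype.ext e1⟩)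
    · left
      rw [hl2 _ hp2, hl2 _ hq2] at hpq'
      have e := hbi (hq p p.2 hp2) (hq q q.2 hq2) hpq'
      have e4 : (p - q : ℝ) * (v - u) = 0 := by linarith
      rcases mul_eq_zero.1 e4 with h' | h'
      · exact Subtype.ext (by linarith)
      · exact absurd h' huv
  · have hτ0 : 0 ≤ (m - s) / (2 * (t - s)) := div_nonneg (by linarith) (by linarith)
    have hτ1 : (m - s) / (2 * (t - s)) ≤ 1/2 := by
      rw [div_le_iff₀ (by linarith)]; linarith
    refine ⟨⟨(m - s) / (2 * (t - s)), hτ0, by linarith⟩, ?_⟩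
    show l ((m - s) / (2 * (t - s))) = a m
    rw [hl1 _ hτ1]
    congr 1
    field_simp
    ring

theorem fp_arc_in {X : Type} [MetricSpace X] [CompactSpace X] [LocallyConnectedSpace X]
    (W : Set X) (hW : IsOpen W) (hWc : IsConnected W) (p q : X) (hp : p ∈ W) (hq : q ∈ W)
    (hpq : p ≠ q) : ∃ a : ℝ → X, Continuous a ∧ InjOn a (Icc 0 1) ∧ a 0 = p ∧ a 1 = q ∧
      ∀ t, a t ∈ W := by
  have := fp_locPath (X := X)
  have hpc : IsPathConnected W := hW.isConnected_iff_isPathConnected.1 hWc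
  obtain ⟨γ, hγ⟩ := hpc.joinedIn p hp q hq
  obtain ⟨a, h1, h2, h3, h4, h5⟩ := fp_arc γ.extend γ.continuous_extend (by simpa using hpq)
  refine ⟨a, h1, h2, by simpa using h3, by simpa using h4, fun t => ?_⟩
  obtain ⟨s, hs, hst⟩ := h5 t
  rw [← hst, γ.extend_apply hs]
  exact hγ _

theorem fp_unique {X : Type} [MetricSpace X] [CompactSpace X]
    [LocallyConnectedSpace X] (hdim : CovDimLE X 1)
    (Y : Set X) (hYconn : IsConnected Y) (hcore : HomotopyCore X ⊆ Y)
    (W : Set X) (hW : IsOpen W) (hWc : IsConnected W) (hWY : W ⊆ Yᶜ)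
    (y₁ y₂ : X) (h₁ : y₁ ∈ Y) (h₂ : y₂ ∈ Y) (hc₁ : y₁ ∈ closure W) (hc₂ : y₂ ∈ closure W) :
    y₁ = y₂ := by
  by_contra hne
  obtain ⟨O₁, O₂, hO₁, hO₂, hm₁, hm₂, hdis⟩ := t2_separation hne
  obtain ⟨V₁, hV₁s, hV₁, hyV₁, hV₁c⟩ :=
    locallyConnectedSpace_iff_subsets_isOpen_isConnected.1 inferInstance y₁ O₁ (hO₁.mem_nhds hm₁)
  obtain ⟨V₂, hV₂s, hV₂, hyV₂, hV₂c⟩ :=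
    locallyConnectedSpace_iff_subsets_isOpen_isConnected.1 inferInstance y₂ O₂ (hO₂.mem_nhds hm₂)
  have hV : Disjoint V₁ V₂ := hdis.mono hV₁s hV₂s
  obtain ⟨p₁, hp₁V, hp₁W⟩ := mem_closure_iff.1 hc₁ V₁ hV₁ hyV₁
  obtain ⟨p₂, hp₂V, hp₂W⟩ := mem_closure_iff.1 hc₂ V₂ hV₂ hyV₂
  have hpne : p₁ ≠ p₂ := fun h => disjoint_left.1 hV hp₁V (h ▸ hp₂V)
  obtain ⟨a, hac, hai, ha0, ha1, haW⟩ := fp_arc_in W hW hWc p₁ p₂ hp₁W hp₂W hpne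
  have hK : IsClosed (a '' Icc 0 1) := (isCompact_Icc.image hac).isClosed
  have hN : ∀ y : X, ∃ N : Set X, y ∈ Y → (N ⊆ (a '' Icc 0 1)ᶜ ∧ IsOpen N ∧ y ∈ N ∧
      IsConnected N) := by
    intro y
    by_cases hy : y ∈ Y
    · have : (a '' Icc 0 1)ᶜ ∈ nhds y := hK.isOpen_compl.mem_nhds (by
        rintro ⟨t, _, rfl⟩
        exact hWY (haW t) hy)
      obtain ⟨N, hN⟩ := locallyConnectedSpace_iff_subsets_isOpen_isConnected.1 inferInstance y _ this
      exact ⟨N, fun _ => hN⟩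
    · exact ⟨∅, fun h => absurd h hy⟩
  choose N hN using hN
  let U₀ : Set X := ⋃ y ∈ Y, N y
  have hU₀o : IsOpen U₀ := isOpen_biUnion fun y hy => (hN y hy).2.1
  have hYU₀ : Y ⊆ U₀ := fun y hy => mem_biUnion hy (hN y hy).2.2.1
  have hU₀c : IsPreconnected U₀ := by
    refine isPreconnected_of_forall y₁ fun z hz => ?_
    obtain ⟨y, hy, hzy⟩ := mem_iUnion₂.1 hz
    refine ⟨Y ∪ N y, union_subset hYU₀ (subset_biUnion_of_mem hy), Or.inl h₁, Or.inr hzy, ?_⟩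
    exact hYconn.isPreconnected.union y hy (hN y hy).2.2.1 (hN y hy).2.2.2.isPreconnected
  let U : Set X := U₀ ∪ V₁ ∪ V₂
  have hUo : IsOpen U := (hU₀o.union hV₁).union hV₂
  have hUc : IsConnected U := by
    refine ⟨⟨y₁, Or.inl (Or.inl (hYU₀ h₁))⟩, ?_⟩
    exact (hU₀c.union y₁ (hYU₀ h₁) hyV₁ hV₁c.isPreconnected).union y₂ (Or.inl (hYU₀ h₂)) hyV₂
      hV₂c.isPreconnected
  obtain ⟨b, hbc, hbi, hb0, hb1, hbU⟩ := fp_arc_in U hUo hUc p₁ p₂ (Or.inl (Or.inr hp₁V))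
    (Or.inr hp₂V) hpne
  obtain ⟨m, hm, hmV⟩ : ∃ m ∈ Icc (0:ℝ) 1, a m ∉ V₁ ∪ V₂ := by
    by_contra! hcon
    obtain ⟨z, -, hz1, hz2⟩ := (isPreconnected_Icc : IsPreconnected (Icc (0:ℝ) 1)) (a ⁻¹' V₁)
      (a ⁻¹' V₂) (hV₁.preimage hac) (hV₂.preimage hac) (fun z hz => hcon z hz)
      ⟨0, by simp, by simpa [ha0] using hp₁V⟩ ⟨1, by simp, by simpa [ha1] using hp₂V⟩
    exact disjoint_left.1 hV hz1 hz2
  have hmb : a m ∉ b '' Icc 0 1 := by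
    rintro ⟨t, _, ht⟩
    have := hbU t
    rw [ht] at this
    rcases this with (h | h) | h
    · obtain ⟨y, hy, hzy⟩ := mem_iUnion₂.1 h
      exact (hN y hy).1 hzy ⟨m, hm, rfl⟩
    · exact hmV (Or.inl h)
    · exact hmV (Or.inr h)
  obtain ⟨x, γ, hinj, hr⟩ := fp_curve a b hac hbc hai hbi ⟨0, by simp, by rw [ha0, hb0]⟩
    ⟨1, by simp, by rw [ha1, hb1]⟩ m hm hmb
  exact hWY (haW m) (hcore (fp_core hdim γ hinj hr))

theorem fp_meet {X : Type} [TopologicalSpace X] [LocallyConnectedSpace X]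
    (Y : Set X) (hY : IsClosed Y) (x : X) (hx : x ∉ Y) (V : Set X) (hV : IsPreconnected V)
    (hxV : x ∈ V) (hVY : (V ∩ Y).Nonempty) :
    ∃ z ∈ V, z ∈ closure (connectedComponentIn Yᶜ x) ∧ z ∈ Y := by
  by_contra! hcon
  set W := connectedComponentIn Yᶜ x with hWdef
  have hxW : x ∈ W := mem_connectedComponentIn hx
  have hWo : IsOpen W := hY.isOpen_compl.connectedComponentIn
  have hWY : W ⊆ Yᶜ := connectedComponentIn_subset _ _
  have hcl : ∀ z ∈ closure W, z ∉ Y → z ∈ W := by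
    intro z hz hzY
    have hpre : IsPreconnected (insert z W) :=
      isPreconnected_connectedComponentIn.subset_closure (subset_insert _ _)
        (insert_subset hz subset_closure)
    exact hpre.subset_connectedComponentIn (mem_insert_of_mem _ hxW)
      (insert_subset hzY hWY) (mem_insert _ _)
  obtain ⟨y, hyV, hyY⟩ := hVY
  obtain ⟨z, -, hz1, hz2⟩ := hV W (closure W)ᶜ hWo isClosed_closure.isOpen_compl (by
      intro z hz
      by_cases h : z ∈ closure W
      · exact Or.inl (hcl z h (hcon z hz h))
      · exact Or.inr h) ⟨x, hxV, hxW⟩ ⟨y, hyV, fun h => hcon y hyV h hyY⟩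
  exact hz2 (subset_closure hz1)


/-- The first point map is a continuous retraction of `X` onto `Y`. -/
theorem stmt_8 {X : Type} [MetricSpace X] [CompactSpace X] [ConnectedSpace X]
    [LocallyConnectedSpace X] (hdim : CovDimLE X 1)
    (Y : Set X) (hYcpt : IsCompact Y) (hYconn : IsConnected Y)
    (hcore : HomotopyCore X ⊆ Y) :
    ∃ r : C(X, X), Set.range r ⊆ Y ∧ (∀ x ∈ Y, r x = x) ∧
      ∀ x, x ∉ Y → ∀ y ∈ Y, ∀ γ : Path x y,
        Function.Injective (fun t => γ t) → r x ∈ Set.range fun t => γ t := by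
  classical
  have hYc : IsClosed Y := hYcpt.isClosed
  have hex : ∀ x : X, ∃ z : X, (x ∈ Y → z = x) ∧
      (x ∉ Y → z ∈ closure (connectedComponentIn Yᶜ x) ∧ z ∈ Y) := by
    intro x
    by_cases hx : x ∈ Y
    · exact ⟨x, fun _ => rfl, fun h => absurd hx h⟩
    · obtain ⟨z, -, hz⟩ := fp_meet Y hYc x hx univ isPreconnected_univ (mem_univ x)
        (by simpa using hYconn.nonempty)
      exact ⟨z, fun h => absurd h hx, fun _ => hz⟩
  choose r hr1 hr2 using hex
  have huniq : ∀ x, x ∉ Y → ∀ z ∈ closure (connectedComponentIn Yᶜ x), z ∈ Y → z = r x := by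
    intro x hx z hz hzY
    exact fp_unique hdim Y hYconn hcore (connectedComponentIn Yᶜ x)
      hYc.isOpen_compl.connectedComponentIn
      (isConnected_connectedComponentIn_iff.2 hx) (connectedComponentIn_subset _ _)
      z (r x) hzY (hr2 x hx).2 hz (hr2 x hx).1
  have hmeet : ∀ x, x ∉ Y → ∀ V : Set X, IsPreconnected V → x ∈ V → (V ∩ Y).Nonempty →
      r x ∈ V := by
    intro x hx V hV hxV hVY
    obtain ⟨z, hzV, hzc, hzY⟩ := fp_meet Y hYc x hx V hV hxV hVY
    rw [← huniq x hx z hzc hzY]; exact hzV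
  have hcont : Continuous r := by
    rw [continuous_iff_continuousAt]
    intro x
    by_cases hx : x ∈ Y
    · intro O hO
      rw [hr1 x hx] at hO
      obtain ⟨V, hVO, hVo, hxV, hVc⟩ :=
        locallyConnectedSpace_iff_subsets_isOpen_isConnected.1 inferInstance x O hO
      rw [Filter.mem_map]
      refine Filter.mem_of_superset (hVo.mem_nhds hxV) fun z hz => hVO ?_
      by_cases hzY : z ∈ Y
      · rw [hr1 z hzY]; exact hz
      · exact hmeet z hzY V hVc.isPreconnected hz ⟨x, hxV, hx⟩
    · have hWo : IsOpen (connectedComponentIn Yᶜ x) := hYc.isOpen_compl.connectedComponentIn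
      refine (continuousAt_const (y := r x)).congr ?_
      filter_upwards [hWo.mem_nhds (mem_connectedComponentIn hx)] with z hz
      have hzY : z ∉ Y := connectedComponentIn_subset _ _ hz
      refine huniq z hzY (r x) ?_ (hr2 x hx).2
      rw [← connectedComponentIn_eq hz]
      exact (hr2 x hx).1
  refine ⟨⟨r, hcont⟩, ?_, fun x hx => hr1 x hx, ?_⟩
  · rintro _ ⟨x, rfl⟩
    show r x ∈ Y
    by_cases hx : x ∈ Y
    · rw [hr1 x hx]; exact hx
    · exact (hr2 x hx).2
  · intro x hx y hy γ _
    exact hmeet x hx (range fun t => γ t) (isPreconnected_range γ.continuous)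
      ⟨0, γ.source⟩ ⟨y, ⟨1, γ.target⟩, hy⟩
end
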